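/- Let Σ_A(ℕ) be a topologically mixing, finitely primitive (BIP) countable Markov shift, f : Σ_A(ℕ) → ℝ satisfying the Walters condition with Var_1 f < ∞ and P(f) < ∞, and for β > 1 let μ_β be the Gibbs measure of βf. Then the family (μ_β)_{β>1} has a weak* accumulation point as β → ∞; moreover, every weak* limit μ_∞ of a sequence μ_{β_j} with β_j → ∞ is a maximizing measure for f, i.e. ∫ f dμ_∞ = m(f). -/

import Mathlib

open Filter Topology MeasureTheory
open scoped ENNReal

/-- The countable Markov shift over alphabet ℕ determined by the 0-1 matrix `A`. -/
def MarkovShift (A : ℕ → ℕ → Bool) : Type :=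
  {x : ℕ → ℕ // ∀ i, A (x i) (x (i + 1)) = true}

namespace MarkovShift

variable {A : ℕ → ℕ → Bool}

instance : TopologicalSpace (MarkovShift A) :=
  instTopologicalSpaceSubtype

instance : MeasurableSpace (MarkovShift A) := borel _

instance : BorelSpace (MarkovShift A) := ⟨rfl⟩

/-- The shift map. -/
def shift (x : MarkovShift A) : MarkovShift A :=
  ⟨fun n => x.1 (n + 1), fun i => x.2 (i + 1)⟩

/-- The cylinder set determined by a finite word. -/
def cylinder (w : List ℕ) : Set (MarkovShift A) :=
  {x | ∀ i : Fin w.length, x.1 i = w.get i}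

/-- The cylinder set determined by the first `m` coordinates of `x`. -/
def cylOf (x : MarkovShift A) (m : ℕ) : Set (MarkovShift A) :=
  {y | ∀ i < m, y.1 i = x.1 i}

/-- A symbol is admissible when its cylinder is nonempty. -/
def Admissible (A : ℕ → ℕ → Bool) (a : ℕ) : Prop :=
  ∃ x : MarkovShift A, x.1 0 = a

/-- Topologically mixing. -/
def TopologicallyMixing (A : ℕ → ℕ → Bool) : Prop :=
  ∀ a b : ℕ, Admissible A a → Admissible A b →
    ∃ N : ℕ, ∀ n ≥ N, ∃ x : MarkovShift A, x.1 0 = a ∧ (shift^[n] x).1 0 = b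

/-- Finitely primitive (BIP). -/
def FinitelyPrimitive (A : ℕ → ℕ → Bool) : Prop :=
  ∃ (K₀ : ℕ) (F : Finset ℕ), ∀ a b : ℕ, Admissible A a → Admissible A b →
    ∃ w : List ℕ, w.length = K₀ ∧ (∀ c ∈ w, c ∈ F) ∧
      List.Chain' (fun u v => A u v = true) (a :: (w ++ [b]))

/-- First coordinate where two distinct points disagree. -/
noncomputable def firstDiff (x y : MarkovShift A) (h : x ≠ y) : ℕ :=
  Nat.find (Function.ne_iff.mp (fun hxy : x.1 = y.1 => h (Subtype.ext hxy)))

open Classical in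
/-- The metric `d(x,y) = r^{t(x,y)}`. -/
noncomputable def dist' (r : ℝ) (x y : MarkovShift A) : ℝ :=
  if h : x = y then 0 else r ^ firstDiff x y h

/-- Birkhoff sum `S_n f`. -/
def birkhoff (f : MarkovShift A → ℝ) (n : ℕ) (x : MarkovShift A) : ℝ :=
  ∑ j ∈ Finset.range n, f (shift^[j] x)

/-- The set of values `|S_n f x - S_n f y|` over pairs agreeing on the first `m` coordinates. -/
def varSet (f : MarkovShift A → ℝ) (n m : ℕ) : Set ℝ :=
  {c | ∃ x y : MarkovShift A, (∀ i < m, x.1 i = y.1 i) ∧ c = |birkhoff f n x - birkhoff f n y|}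

/-- `Var_m (S_n f)`. -/
noncomputable def varBirk (f : MarkovShift A → ℝ) (n m : ℕ) : ℝ := sSup (varSet f n m)

/-- `Var_1 f < ∞`. -/
def Var1Finite (f : MarkovShift A → ℝ) : Prop := BddAbove (varSet f 1 1)

/-- The set whose supremum is `sup_{n ≥ 1} Var_{n+k}(S_n f)`. -/
def waltersSet (f : MarkovShift A → ℝ) (k : ℕ) : Set ℝ :=
  {c | ∃ n, 1 ≤ n ∧ c ∈ varSet f n (n + k)}

/-- `M_k = sup_{n ≥ 1} Var_{n+k}(S_n f)`. -/
noncomputable def waltersSup (f : MarkovShift A → ℝ) (k : ℕ) : ℝ := sSup (waltersSet f k)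

/-- The Walters condition. -/
def SatisfiesWalters (f : MarkovShift A → ℝ) : Prop :=
  (∀ k, 1 ≤ k → BddAbove (waltersSet f k)) ∧
    Tendsto (fun k => waltersSup f k) atTop (𝓝 0)

/-- The partition function `Z_n(f,a) = Σ_{σ^n x = x, x₀ = a} e^{S_n f (x)}`. -/
noncomputable def partitionSum (f : MarkovShift A → ℝ) (n : ℕ) (a : ℕ) : ℝ :=
  ∑' x : {x : MarkovShift A // shift^[n] x = x ∧ x.1 0 = a}, Real.exp (birkhoff f n x.1)

/-- `f` has (finite) Gurevich pressure `p`. -/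
def HasGurevichPressure (f : MarkovShift A → ℝ) (p : ℝ) : Prop :=
  ∀ a : ℕ, Admissible A a →
    (∀ n, 1 ≤ n → Summable fun x : {x : MarkovShift A // shift^[n] x = x ∧ x.1 0 = a} =>
        Real.exp (birkhoff f n x.1)) ∧
    Tendsto (fun n : ℕ => (1 / (n : ℝ)) * Real.log (partitionSum f n a)) atTop (𝓝 p)

/-- σ-invariant Borel probability measure. -/
def IsInvariantProb (μ : Measure (MarkovShift A)) : Prop :=
  IsProbabilityMeasure μ ∧ μ.map shift = μ

/-- `m(f)`, the maximal ergodic average. -/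
noncomputable def mf (f : MarkovShift A → ℝ) : ℝ :=
  sSup {c | ∃ μ : Measure (MarkovShift A),
    IsInvariantProb μ ∧ Integrable f μ ∧ ∫ x, f x ∂μ = c}

/-- A maximizing measure for `f`. -/
def IsMaximizing (f : MarkovShift A → ℝ) (μ : Measure (MarkovShift A)) : Prop :=
  IsInvariantProb μ ∧ Integrable f μ ∧ ∫ x, f x ∂μ = mf f

/-- Bounded real valued function. -/
def BoundedFun (g : MarkovShift A → ℝ) : Prop := ∃ C, ∀ x, |g x| ≤ C

/-- A bounded calibrated sub-action for `f`. -/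
def IsCalibratedSubaction (f V : MarkovShift A → ℝ) : Prop :=
  Continuous V ∧ BoundedFun V ∧
    (∀ x, f x + V x - V (shift x) - mf f ≤ 0) ∧
    (∀ y, ∃ x, shift x = y ∧ f x + V x - V (shift x) - mf f = 0)

/-- The Ruelle transfer operator `(L_g u)(x) = Σ_{σ y = x} e^{g(y)} u(y)`. -/
noncomputable def ruelle (g u : MarkovShift A → ℝ) (x : MarkovShift A) : ℝ :=
  ∑' y : {y : MarkovShift A // shift y = x}, Real.exp (g y.1) * u y.1

/-- Ruelle-Perron-Frobenius data for the potential `f` with pressure `p`: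
eigenfunction `h`, eigenmeasure `ν`. -/
def IsRPF (f : MarkovShift A → ℝ) (p : ℝ) (h : MarkovShift A → ℝ)
    (ν : Measure (MarkovShift A)) : Prop :=
  Continuous h ∧ (∀ x, 0 < h x) ∧
    (∀ x, ruelle f h x = Real.exp p * h x) ∧
    IsProbabilityMeasure ν ∧
    (∀ g : MarkovShift A → ℝ, Continuous g → BoundedFun g →
      ∫ x, ruelle f g x ∂ν = Real.exp p * ∫ x, g x ∂ν) ∧
    ∫ x, h x ∂ν = 1

/-- The Gibbs measure `dμ = h dν`. -/
noncomputable def gibbs (h : MarkovShift A → ℝ) (ν : Measure (MarkovShift A)) :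
    Measure (MarkovShift A) :=
  ν.withDensity fun x => ENNReal.ofReal (h x)

/-- The Mañé potential `S_f(x,y)` (with respect to the metric of parameter `r`). -/
noncomputable def manePot (r : ℝ) (f : MarkovShift A → ℝ) (x y : MarkovShift A) : EReal :=
  ⨅ ε : {ε : ℝ // 0 < ε}, ⨆ n : {n : ℕ // 1 ≤ n},
    ⨆ _z : {z : MarkovShift A // dist' r x z < ε.1 ∧ shift^[n.1] z = y},
      ((birkhoff (fun w => f w - mf f) n.1 _z.1 : ℝ) : EReal)

/-- The (topological) support of a measure. -/
def msupport (μ : Measure (MarkovShift A)) : Set (MarkovShift A) :=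
  {x | ∀ U : Set (MarkovShift A), IsOpen U → x ∈ U → 0 < μ U}

end MarkovShift


open Filter Topology MeasureTheory
open scoped ENNReal
namespace MarkovShift
variable {A : ℕ → ℕ → Bool}

lemma isEmbedding_val : IsEmbedding (fun x : MarkovShift A => x.1) :=
  ⟨⟨rfl⟩, Subtype.val_injective⟩

instance instSC : SecondCountableTopology (MarkovShift A) :=
  isEmbedding_val.secondCountableTopology

instance instMetriz : TopologicalSpace.MetrizableSpace (MarkovShift A) :=
  isEmbedding_val.metrizableSpace

lemma continuous_val : Continuous (fun x : MarkovShift A => x.1) := continuous_subtype_val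

lemma continuous_coord (i : ℕ) : Continuous (fun x : MarkovShift A => x.1 i) :=
  (continuous_apply i).comp continuous_val

lemma continuous_into {Y : Type*} [TopologicalSpace Y] {φ : Y → MarkovShift A}
    (hφ : ∀ i, Continuous fun y => (φ y).1 i) : Continuous φ :=
  continuous_induced_rng.2 (continuous_pi hφ)

lemma continuous_shift : Continuous (shift : MarkovShift A → MarkovShift A) :=
  continuous_into fun i => continuous_coord (i + 1)

lemma measurable_shift : Measurable (shift : MarkovShift A → MarkovShift A) :=
  continuous_shift.measurable

lemma isClopen_coord (i : ℕ) (S : Set ℕ) : IsClopen {x : MarkovShift A | x.1 i ∈ S} :=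
  (isClopen_discrete S).preimage (continuous_coord i)

lemma iterate_coord (n i : ℕ) (x : MarkovShift A) : (shift^[n] x).1 i = x.1 (i + n) := by
  induction n generalizing x with
  | zero => rfl
  | succ n ih => rw [Function.iterate_succ_apply, ih]; show x.1 (i + n + 1) = _; congr 1

lemma isOpen_cylOf (x : MarkovShift A) (n : ℕ) : IsOpen (cylOf x n) := by
  have : cylOf x n = ⋂ i ∈ Finset.range n, {y : MarkovShift A | y.1 i ∈ ({x.1 i} : Set ℕ)} := by
    ext y; simp [cylOf]
  rw [this]
  exact isOpen_biInter_finset fun i _ => (isClopen_coord i _).isOpen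

lemma exists_cylOf_subset {U : Set (MarkovShift A)} (hU : IsOpen U) {x : MarkovShift A}
    (hx : x ∈ U) : ∃ n, cylOf x n ⊆ U := by
  obtain ⟨V, hV, rfl⟩ := isOpen_induced_iff.1 hU
  obtain ⟨I, u, hu, hI⟩ := isOpen_pi_iff.1 hV x.1 hx
  refine ⟨I.sup id + 1, fun y hy => hI fun i hi => ?_⟩
  have : i ≤ I.sup id := Finset.le_sup (f := id) hi
  rw [hy i (by omega)]
  exact (hu i hi).2

lemma isClopen_cylinder (w : List ℕ) : IsClopen (cylinder w : Set (MarkovShift A)) := by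
  have : (cylinder w : Set (MarkovShift A)) =
      ⋂ i : Fin w.length, {y : MarkovShift A | y.1 i ∈ ({w.get i} : Set ℕ)} := by
    ext y; simp [cylinder]
  rw [this]
  exact isClopen_iInter_of_finite fun i => (isClopen_coord i _)

lemma cylOf_eq_cylinder (x : MarkovShift A) (n : ℕ) :
    cylOf x n = cylinder (List.ofFn fun i : Fin n => x.1 i) := by
  ext y
  simp only [cylOf, cylinder, Set.mem_ofPred_eq]
  constructor
  · intro h i
    have := i.2
    simp only [List.length_ofFn] at this
    simp [h i this]
  · intro h i hi
    have := h ⟨i, by simpa using hi⟩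
    simpa using this

lemma cylinder_eq_cylOf {w : List ℕ} {x : MarkovShift A} (hx : x ∈ (cylinder w : Set (MarkovShift A))) :
    cylinder w = cylOf x w.length := by
  ext y
  simp only [cylOf, cylinder, Set.mem_ofPred_eq] at *
  constructor
  · intro h i hi
    rw [h ⟨i, hi⟩, hx ⟨i, hi⟩]
  · intro h i
    rw [h i i.2, hx i]

lemma isPiSystem_cylinder :
    IsPiSystem {s : Set (MarkovShift A) | ∃ w, s = cylinder w} := by
  rintro _ ⟨w, rfl⟩ _ ⟨v, rfl⟩ ⟨x, hx, hx'⟩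
  refine ⟨List.ofFn fun i : Fin (max w.length v.length) => x.1 i, ?_⟩
  rw [← cylOf_eq_cylinder, cylinder_eq_cylOf hx, cylinder_eq_cylOf hx']
  ext y
  simp only [cylOf, Set.mem_inter_iff, Set.mem_ofPred_eq]
  constructor
  · rintro ⟨h1, h2⟩ i hi
    rcases lt_max_iff.1 hi with h | h
    · exact h1 i h
    · exact h2 i h
  · intro h
    exact ⟨fun i hi => h i (lt_max_of_lt_left hi), fun i hi => h i (lt_max_of_lt_right hi)⟩

lemma borel_eq_clopen :
    (inferInstance : MeasurableSpace (MarkovShift A)) =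
      MeasurableSpace.generateFrom {s : Set (MarkovShift A) | IsClopen s} := by
  have hb : TopologicalSpace.IsTopologicalBasis {s : Set (MarkovShift A) | IsClopen s} := by
    refine TopologicalSpace.isTopologicalBasis_of_isOpen_of_nhds (fun s hs => hs.isOpen) ?_
    intro x U hx hU
    obtain ⟨n, hn⟩ := exists_cylOf_subset hU hx
    refine ⟨cylOf x n, ?_, fun i _ => rfl, hn⟩
    rw [cylOf_eq_cylinder]
    exact isClopen_cylinder _
  exact hb.borel_eq_generateFrom

lemma isPiSystem_clopen : IsPiSystem {s : Set (MarkovShift A) | IsClopen s} :=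
  fun _ hs _ ht _ => IsClopen.inter hs ht

/-- A locally constant function (depending on the first `n` coordinates) is measurable. -/
lemma measurable_of_cyl {Y : Type*} [MeasurableSpace Y] (n : ℕ) (φ : MarkovShift A → Y)
    (hφ : ∀ x y : MarkovShift A, (∀ i < n, x.1 i = y.1 i) → φ x = φ y) : Measurable φ := by
  intro s _
  apply IsOpen.measurableSet
  rw [isOpen_iff_mem_nhds]
  intro x hx
  refine mem_of_superset ((isOpen_cylOf x n).mem_nhds (fun i _ => rfl)) ?_
  intro y hy
  show φ y ∈ s
  rw [hφ y x hy]; exact hx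

/-- prepend a symbol -/
def cons (a : ℕ) (x : MarkovShift A) (h : A a (x.1 0) = true) : MarkovShift A :=
  ⟨fun n => Nat.casesOn n a x.1, fun i => by cases i with
    | zero => exact h
    | succ i => exact x.2 i⟩

@[simp] lemma cons_zero (a : ℕ) (x : MarkovShift A) (h) : (cons a x h).1 0 = a := rfl
@[simp] lemma cons_succ (a : ℕ) (x : MarkovShift A) (h) (i : ℕ) :
    (cons a x h).1 (i + 1) = x.1 i := rfl
@[simp] lemma shift_cons (a : ℕ) (x : MarkovShift A) (h) : shift (cons a x h) = x := rfl
@[simp] lemma shift_coord (x : MarkovShift A) (i : ℕ) : (shift x).1 i = x.1 (i + 1) := rfl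

lemma ext_of_shift {x y : MarkovShift A} (h0 : x.1 0 = y.1 0) (h : shift x = shift y) : x = y := by
  apply Subtype.ext
  funext i
  cases i with
  | zero => exact h0
  | succ i => exact congrFun (congrArg Subtype.val h) i

/-- inverse branch, with junk value outside its domain -/
def br (a : ℕ) (x : MarkovShift A) : MarkovShift A :=
  if h : A a (x.1 0) = true then cons a x h else x

lemma br_zero {a : ℕ} {x : MarkovShift A} (h : A a (x.1 0) = true) : (br a x).1 0 = a := by
  simp [br, h]

lemma shift_br {a : ℕ} {x : MarkovShift A} (h : A a (x.1 0) = true) : shift (br a x) = x := by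
  simp [br, h]

lemma br_of_shift {y x : MarkovShift A} (h : shift y = x) :
    A (y.1 0) (x.1 0) = true ∧ br (y.1 0) x = y := by
  subst h
  have h : A (y.1 0) ((shift y).1 0) = true := y.2 0
  exact ⟨h, ext_of_shift (br_zero h) (shift_br h)⟩

lemma continuous_br (a : ℕ) : Continuous (br a : MarkovShift A → MarkovShift A) := by
  apply continuous_into
  intro i
  have hc : ∀ j, Continuous fun x : MarkovShift A =>
      (if A a (x.1 0) = true then (if j = 0 then a else x.1 (j - 1)) else x.1 j : ℕ) := by
    intro j
    have : (fun x : MarkovShift A =>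
      (if A a (x.1 0) = true then (if j = 0 then a else x.1 (j - 1)) else x.1 j : ℕ)) =
      (fun q : ℕ × ℕ × ℕ => if A a q.1 = true then (if j = 0 then a else q.2.1) else q.2.2) ∘
        (fun x : MarkovShift A => (x.1 0, x.1 (j - 1), x.1 j)) := rfl
    rw [this]
    exact continuous_of_discreteTopology.comp
      ((continuous_coord 0).prodMk ((continuous_coord (j - 1)).prodMk (continuous_coord j)))
  convert! hc i using 2 with x
  unfold br
  split_ifs with h h'
  · subst h'; rfl
  · obtain ⟨k, rfl⟩ := Nat.exists_eq_succ_of_ne_zero h'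
    rfl
  · rfl

end MarkovShift

open Filter Topology MeasureTheory
open scoped ENNReal
namespace MarkovShift
variable {A : ℕ → ℕ → Bool}

open Classical in
/-- iterated transfer operator on `[0,∞]`-valued functions -/
noncomputable def Lop (g : MarkovShift A → ℝ) (n : ℕ) (u : MarkovShift A → ℝ≥0∞)
    (x : MarkovShift A) : ℝ≥0∞ :=
  ∑' y : MarkovShift A, if shift^[n] y = x then ENNReal.ofReal (Real.exp (birkhoff g n y)) * u y
    else 0

lemma Lop_eq_subtype (g : MarkovShift A → ℝ) (n : ℕ) (u : MarkovShift A → ℝ≥0∞)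
    (x : MarkovShift A) :
    Lop g n u x = ∑' y : {y : MarkovShift A // shift^[n] y = x},
      ENNReal.ofReal (Real.exp (birkhoff g n y.1)) * u y.1 := by
  classical
  unfold Lop
  have := tsum_subtype {y : MarkovShift A | shift^[n] y = x}
    (fun y => ENNReal.ofReal (Real.exp (birkhoff g n y)) * u y)
  refine Eq.trans ?_ this.symm
  refine tsum_congr fun y => ?_
  simp only [Set.indicator_apply, Set.mem_ofPred_eq]

lemma birkhoff_succ (g : MarkovShift A → ℝ) (n : ℕ) (y : MarkovShift A) :
    birkhoff g (n + 1) y = birkhoff g n (shift y) + g y := by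
  simp [birkhoff, Finset.sum_range_succ']

lemma birkhoff_one (g : MarkovShift A → ℝ) (y : MarkovShift A) : birkhoff g 1 y = g y := by
  simp [birkhoff]

lemma Lop_succ (g : MarkovShift A → ℝ) (n : ℕ) (u : MarkovShift A → ℝ≥0∞) :
    Lop g (n + 1) u = Lop g n (Lop g 1 u) := by
  classical
  funext x
  simp only [Lop]
  have : ∀ z : MarkovShift A, (if shift^[n] z = x then
      ENNReal.ofReal (Real.exp (birkhoff g n z)) *
        (∑' y : MarkovShift A, if shift^[1] y = z then
          ENNReal.ofReal (Real.exp (birkhoff g 1 y)) * u y else 0) else 0) =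
      ∑' y : MarkovShift A, if z = shift y then (if shift^[n] (shift y) = x then
        ENNReal.ofReal (Real.exp (birkhoff g (n+1) y)) * u y else 0) else 0 := by
    intro z
    rw [← ENNReal.tsum_mul_left]
    split_ifs with h
    · refine tsum_congr fun y => ?_
      by_cases hy : z = shift y
      · subst hy
        rw [if_pos (show shift^[1] y = shift y from rfl), if_pos rfl, if_pos h, birkhoff_one, birkhoff_succ]
        rw [Real.exp_add, ENNReal.ofReal_mul (Real.exp_pos _).le, mul_assoc]
      · have hy' : ¬ (shift^[1] y = z) := fun h => hy h.symm
        rw [if_neg hy', if_neg hy, mul_zero]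
    · symm
      rw [ENNReal.tsum_eq_zero]
      intro y
      by_cases hy : z = shift y
      · subst hy; simp [h]
      · simp [hy]
  rw [tsum_congr this, ENNReal.tsum_comm]
  refine tsum_congr fun y => ?_
  rw [tsum_ite_eq]
  rfl

lemma Lop_one_branch (g : MarkovShift A → ℝ) (u : MarkovShift A → ℝ≥0∞) (x : MarkovShift A) :
    Lop g 1 u x = ∑' a : ℕ, if A a (x.1 0) = true then
      ENNReal.ofReal (Real.exp (g (br a x))) * u (br a x) else 0 := by
  have h2 := tsum_subtype {a : ℕ | A a (x.1 0) = true}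
    (fun a => ENNReal.ofReal (Real.exp (g (br a x))) * u (br a x))
  rw [Lop_eq_subtype]
  refine Eq.trans ?_ (h2.trans ?_)
  · let e : {y : MarkovShift A // shift^[1] y = x} ≃ {a : ℕ | A a (x.1 0) = true} :=
      { toFun := fun y => ⟨y.1.1 0, (br_of_shift y.2).1⟩
        invFun := fun a => ⟨br a.1 x, shift_br a.2⟩
        left_inv := fun y => Subtype.ext (br_of_shift y.2).2
        right_inv := fun a => Subtype.ext (br_zero a.2) }
    rw [← e.tsum_eq]
    refine tsum_congr fun y => ?_
    have : br (y.1.1 0) x = y.1 := (br_of_shift y.2).2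
    show _ = ENNReal.ofReal (Real.exp (g (br (y.1.1 0) x))) * u (br (y.1.1 0) x)
    rw [this, birkhoff_one]
  · refine tsum_congr fun y => ?_
    simp only [Set.indicator_apply, Set.mem_ofPred_eq]

/-- duality for `E` clopen inside a 1-cylinder -/
lemma dual_clopen {g : MarkovShift A → ℝ} {p : ℝ} {ν : Measure (MarkovShift A)}
    [IsProbabilityMeasure ν] (hg : Continuous g) {a : ℕ} {C : ℝ}
    (hC : ∀ x : MarkovShift A, x.1 0 = a → g x ≤ C)
    (hdual : ∀ u : MarkovShift A → ℝ, Continuous u → BoundedFun u →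
      ∫ x, ruelle g u x ∂ν = Real.exp p * ∫ x, u x ∂ν)
    {E : Set (MarkovShift A)} (hE : IsClopen E) :
    ∫⁻ x, {x : MarkovShift A | A a (x.1 0) = true}.indicator
      (fun x => ENNReal.ofReal (Real.exp (g (br a x))) * E.indicator 1 (br a x)) x ∂ν
      = ENNReal.ofReal (Real.exp p) * ν (E ∩ {x | x.1 0 ∈ ({a} : Set ℕ)}) := by
  classical
  set S : Set (MarkovShift A) := E ∩ {x | x.1 0 ∈ ({a} : Set ℕ)} with hS
  have hSc : IsClopen S := hE.inter (isClopen_coord 0 _)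
  have hD : MeasurableSet {x : MarkovShift A | A a (x.1 0) = true} :=
    (isClopen_coord 0 {b | A a b = true}).isOpen.measurableSet
  have h1 := hdual (S.indicator (fun _ => (1 : ℝ))) (continuous_const.indicator (by
      intro x hx; rw [hSc.frontier_eq] at hx; exact hx.elim)) ⟨1, fun x => by
      by_cases hx : x ∈ S <;> simp [hx]⟩
  rw [integral_indicator_const _ hSc.isOpen.measurableSet] at h1
  simp only [smul_eq_mul, mul_one] at h1
  have h2 : ∀ x, ruelle g (S.indicator (fun _ => (1 : ℝ))) x =
      {x : MarkovShift A | A a (x.1 0) = true}.indicator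
      (fun x => Real.exp (g (br a x)) * E.indicator 1 (br a x)) x := by
    intro x
    unfold ruelle
    by_cases hx : A a (x.1 0) = true
    · rw [tsum_eq_single ⟨br a x, shift_br hx⟩]
      · simp only [Set.indicator_apply, Set.mem_ofPred_eq, hx, if_true, S, Set.mem_inter_iff,
          br_zero hx, Set.mem_singleton_iff, and_true, Pi.one_apply]
      · rintro ⟨y, hy⟩ hne
        have : y.1 0 ≠ a := by
          rintro h; apply hne
          apply Subtype.ext
          show y = br a x
          rw [← h]; exact (br_of_shift hy).2.symm
        simp [S, this]
    · have : ∀ y : {y : MarkovShift A // shift y = x}, Real.exp (g y.1) *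
          S.indicator (fun _ => (1 : ℝ)) y.1 = 0 := by
        rintro ⟨y, hy⟩
        have : y.1 0 ≠ a := by
          rintro h; apply hx; rw [← h]; exact (br_of_shift hy).1
        simp [S, this]
      rw [tsum_congr this]; simp [hx]
  simp_rw [h2] at h1
  have hm : Measurable (fun x => {x : MarkovShift A | A a (x.1 0) = true}.indicator
      (fun x => Real.exp (g (br a x)) * E.indicator 1 (br a x)) x) := by
    refine Measurable.indicator ?_ hD
    refine ((Real.measurable_exp.comp (hg.measurable.comp (continuous_br a).measurable))).mul ?_
    exact (measurable_one.indicator hE.isOpen.measurableSet).comp (continuous_br a).measurable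
  have hnn : ∀ x, 0 ≤ {x : MarkovShift A | A a (x.1 0) = true}.indicator
      (fun x => Real.exp (g (br a x)) * E.indicator 1 (br a x)) x := by
    intro x
    apply Set.indicator_nonneg
    intro x _
    exact mul_nonneg (Real.exp_pos _).le (Set.indicator_nonneg (by simp) _)
  have hIntOne : Integrable (fun x => {x : MarkovShift A | A a (x.1 0) = true}.indicator
      (fun x => Real.exp (g (br a x)) * E.indicator 1 (br a x)) x) ν := by
    refine Integrable.of_bound hm.aestronglyMeasurable (Real.exp C) (ae_of_all _ fun x => ?_)
    rw [Real.norm_eq_abs, abs_of_nonneg (hnn x)]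
    by_cases hx : A a (x.1 0) = true
    · rw [Set.indicator_of_mem (by exact hx)]
      by_cases hx' : br a x ∈ E
      · simp only [hx', Set.indicator_of_mem, Pi.one_apply, mul_one]
        exact Real.exp_le_exp.2 (hC _ (br_zero hx))
      · simp [hx', (Real.exp_pos _).le]
    · rw [Set.indicator_of_notMem (by exact hx)]; exact (Real.exp_pos _).le
  have h3 := ofReal_integral_eq_lintegral_ofReal hIntOne (ae_of_all _ hnn)
  rw [h1, ENNReal.ofReal_mul (Real.exp_pos _).le, ofReal_measureReal] at h3
  rw [h3]
  refine lintegral_congr fun x => ?_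
  simp only [Set.indicator_apply]
  split_ifs <;> simp

lemma dual_lintegral {g : MarkovShift A → ℝ} {p : ℝ} {ν : Measure (MarkovShift A)}
    [IsProbabilityMeasure ν] (hg : Continuous g)
    (hC : ∀ a, ∃ C, ∀ x : MarkovShift A, x.1 0 = a → g x ≤ C)
    (hdual : ∀ u : MarkovShift A → ℝ, Continuous u → BoundedFun u →
      ∫ x, ruelle g u x ∂ν = Real.exp p * ∫ x, u x ∂ν)
    {u : MarkovShift A → ℝ≥0∞} (hu : Measurable u) :
    ∫⁻ x, Lop g 1 u x ∂ν = ENNReal.ofReal (Real.exp p) * ∫⁻ x, u x ∂ν := by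
  classical
  let D : ℕ → Set (MarkovShift A) := fun a => {x | A a (x.1 0) = true}
  have hD : ∀ a, MeasurableSet (D a) := fun a =>
    (isClopen_coord 0 {b | A a b = true}).isOpen.measurableSet
  let B : ℕ → Set (MarkovShift A) := fun a => {x | x.1 0 ∈ ({a} : Set ℕ)}
  have hB : ∀ a, MeasurableSet (B a) := fun a => (isClopen_coord 0 {a}).isOpen.measurableSet
  have hbm : ∀ a, Measurable (br a : MarkovShift A → MarkovShift A) := fun a =>
    (continuous_br a).measurable
  have hwm : ∀ a, Measurable fun x : MarkovShift A => ENNReal.ofReal (Real.exp (g (br a x))) :=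
    fun a => ENNReal.measurable_ofReal.comp
      (Real.measurable_exp.comp (hg.measurable.comp (hbm a)))
  let ν' : ℕ → Measure (MarkovShift A) := fun a =>
    (((ν.restrict (D a)).withDensity
      (fun x => ENNReal.ofReal (Real.exp (g (br a x)))))).map (br a)
  have hν' : ∀ a (v : MarkovShift A → ℝ≥0∞), Measurable v → ∫⁻ x, v x ∂(ν' a) =
      ∫⁻ x, (D a).indicator (fun x => ENNReal.ofReal (Real.exp (g (br a x))) * v (br a x)) x ∂ν := by
    intro a v hv
    rw [lintegral_map hv (hbm a), lintegral_indicator (hD a)]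
    exact lintegral_withDensity_eq_lintegral_mul _ (hwm a) (hv.comp (hbm a))
  have hcl : ∀ a (E : Set (MarkovShift A)), IsClopen E →
      (ENNReal.ofReal (Real.exp p) • ν.restrict (B a)) E = ν' a E := by
    intro a E hE
    obtain ⟨C, hC⟩ := hC a
    have := dual_clopen hg hC hdual hE
    rw [← hν' a (E.indicator 1) (measurable_one.indicator hE.isOpen.measurableSet),
      lintegral_indicator_one hE.isOpen.measurableSet] at this
    rw [this, Measure.smul_apply, Measure.restrict_apply hE.isOpen.measurableSet]
    rfl
  have heq : ∀ a, ENNReal.ofReal (Real.exp p) • ν.restrict (B a) = ν' a := by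
    intro a
    have : IsFiniteMeasure (ENNReal.ofReal (Real.exp p) • ν.restrict (B a)) :=
      Measure.smul_finite _ ENNReal.ofReal_ne_top
    exact ext_of_generate_finite _ borel_eq_clopen isPiSystem_clopen
      (fun s hs => hcl a s hs) (hcl a _ isClopen_univ)
  have h1 : ∀ x, Lop g 1 u x = ∑' a : ℕ, (D a).indicator
      (fun x => ENNReal.ofReal (Real.exp (g (br a x))) * u (br a x)) x := by
    intro x
    rw [Lop_one_branch]
    refine tsum_congr fun a => ?_
    simp only [Set.indicator_apply, D, Set.mem_ofPred_eq]
  simp_rw [h1]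
  rw [lintegral_tsum]
  · simp_rw [← hν' _ u hu, ← heq, lintegral_smul_measure, smul_eq_mul]
    rw [ENNReal.tsum_mul_left]
    congr 1
    rw [← lintegral_iUnion hB]
    · have : (⋃ a, B a) = Set.univ := by
        ext x; simp [B]
      rw [this, Measure.restrict_univ]
    · intro a b hab
      rw [Function.onFun, Set.disjoint_left]
      intro x hx hx'
      exact hab (hx.symm.trans hx')
  · intro a
    exact (((hwm a).mul (hu.comp (hbm a))).indicator (hD a)).aemeasurable

lemma measurable_Lop {g : MarkovShift A → ℝ} (hg : Continuous g)
    {u : MarkovShift A → ℝ≥0∞} (hu : Measurable u) : Measurable (Lop g 1 u) := by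
  classical
  have : Lop g 1 u = fun x => ∑' a : ℕ, {x : MarkovShift A | A a (x.1 0) = true}.indicator
      (fun x => ENNReal.ofReal (Real.exp (g (br a x))) * u (br a x)) x := by
    funext x
    rw [Lop_one_branch]
    refine tsum_congr fun a => ?_
    simp only [Set.indicator_apply, Set.mem_ofPred_eq]
  rw [this]
  refine Measurable.tsum fun a => ?_
  refine Measurable.indicator ?_ (isClopen_coord 0 {b | A a b = true}).isOpen.measurableSet
  have hb := (continuous_br (A := A) a).measurable
  exact (ENNReal.measurable_ofReal.comp
      (Real.measurable_exp.comp (hg.measurable.comp hb))).mul (hu.comp hb)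

lemma Lop_zero (g : MarkovShift A → ℝ) (u : MarkovShift A → ℝ≥0∞) : Lop g 0 u = u := by
  classical
  funext x
  unfold Lop
  rw [tsum_eq_single x]
  · simp [birkhoff]
  · intro y hy; simp [hy]

lemma dual_iter {g : MarkovShift A → ℝ} {q : ℝ≥0∞} {ν : Measure (MarkovShift A)}
    (hg : Continuous g)
    (hd : ∀ u : MarkovShift A → ℝ≥0∞, Measurable u → ∫⁻ x, Lop g 1 u x ∂ν = q * ∫⁻ x, u x ∂ν)
    (n : ℕ) {u : MarkovShift A → ℝ≥0∞} (hu : Measurable u) :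
    ∫⁻ x, Lop g n u x ∂ν = q ^ n * ∫⁻ x, u x ∂ν := by
  induction n generalizing u with
  | zero => simp [Lop_zero]
  | succ n ih => rw [Lop_succ, ih (measurable_Lop hg hu), hd u hu, pow_succ, mul_assoc]

lemma Lop_const_mul (g : MarkovShift A → ℝ) (n : ℕ) (c : ℝ≥0∞) (u : MarkovShift A → ℝ≥0∞) :
    Lop g n (fun x => c * u x) = fun x => c * Lop g n u x := by
  funext x
  simp only [Lop_eq_subtype, ← ENNReal.tsum_mul_left]
  refine tsum_congr fun y => by ring

lemma Lop_comp_mul (g : MarkovShift A → ℝ) (n : ℕ) (v u : MarkovShift A → ℝ≥0∞) :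
    Lop g n (fun x => v (shift^[n] x) * u x) = fun x => v x * Lop g n u x := by
  funext x
  simp only [Lop_eq_subtype, ← ENNReal.tsum_mul_left]
  refine tsum_congr fun y => ?_
  rw [y.2]; ring

lemma Lop_iter_eigen {g : MarkovShift A → ℝ} {q : ℝ≥0∞} {u : MarkovShift A → ℝ≥0∞}
    (hu : Lop g 1 u = fun x => q * u x) (n : ℕ) : Lop g n u = fun x => q ^ n * u x := by
  induction n with
  | zero => simp [Lop_zero]
  | succ n ih =>
    rw [Lop_succ, hu, Lop_const_mul, ih]; funext x; ring

/-- the eigenfunction equation in `[0,∞]` -/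
lemma Lop_eigen {g h : MarkovShift A → ℝ} {p : ℝ} (hpos : ∀ x, 0 < h x)
    (he : ∀ x, ruelle g h x = Real.exp p * h x) :
    Lop g 1 (fun x => ENNReal.ofReal (h x)) =
      fun x => ENNReal.ofReal (Real.exp p) * ENNReal.ofReal (h x) := by
  funext x
  rw [Lop_eq_subtype, ← ENNReal.ofReal_mul (Real.exp_pos _).le, ← he]
  have hs : Summable fun y : {y : MarkovShift A // shift y = x} => Real.exp (g y.1) * h y.1 := by
    by_contra hs
    have := he x
    rw [ruelle, tsum_eq_zero_of_not_summable hs] at this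
    exact absurd this (mul_pos (Real.exp_pos _) (hpos x)).ne
  rw [ruelle, ENNReal.ofReal_tsum_of_nonneg (fun y => (mul_pos (Real.exp_pos _) (hpos _)).le) hs]
  refine tsum_congr fun y => ?_
  rw [birkhoff_one, ENNReal.ofReal_mul (Real.exp_pos _).le]

end MarkovShift

open Filter Topology MeasureTheory
open scoped ENNReal
namespace MarkovShift
variable {A : ℕ → ℕ → Bool}

/-- connection property extracted from finite primitivity -/
def Conn (A : ℕ → ℕ → Bool) (K : ℕ) (F : Finset ℕ) : Prop :=
  ∀ (z y : MarkovShift A) (n : ℕ), 1 ≤ n → ∃ z' : MarkovShift A,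
    (∀ i < n, z'.1 i = z.1 i) ∧ shift^[n + K] z' = y ∧
      ∀ i, n ≤ i → i < n + K → z'.1 i ∈ F

lemma exists_words (hbip : FinitelyPrimitive A) (x0 : MarkovShift A) :
    ∃ (K : ℕ) (F : Finset ℕ), 1 ≤ K ∧ ∀ a b : ℕ, Admissible A a → Admissible A b →
      ∃ w : ℕ → ℕ, w 0 = a ∧ w (K + 1) = b ∧ (∀ i ≤ K, A (w i) (w (i + 1)) = true) ∧
        ∀ i, 1 ≤ i → i ≤ K → w i ∈ F := by
  obtain ⟨K, F, hKF⟩ := hbip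
  rcases Nat.eq_zero_or_pos K with hK | hK
  · subst hK
    have hA : ∀ a b, Admissible A a → Admissible A b → A a b = true := by
      intro a b ha hb
      obtain ⟨w, hw, -, hc⟩ := hKF a b ha hb
      rw [List.length_eq_zero_iff] at hw
      subst hw
      have hc : List.IsChain (fun u v => A u v = true) [a, b] := hc
      simpa using hc
    refine ⟨1, {x0.1 0}, le_rfl, fun a b ha hb => ?_⟩
    have h0 : Admissible A (x0.1 0) := ⟨x0, rfl⟩
    refine ⟨fun i => if i = 0 then a else if i = 1 then x0.1 0 else b, by simp, by simp, ?_, ?_⟩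
    · intro i hi
      interval_cases i
      · simpa using hA _ _ ha h0
      · simpa using hA _ _ h0 hb
    · intro i h1 h2
      obtain rfl : i = 1 := le_antisymm h2 h1
      simp
  · refine ⟨K, F, hK, fun a b ha hb => ?_⟩
    obtain ⟨w, hw, hF, hc⟩ := hKF a b ha hb
    have hlen : (a :: (w ++ [b])).length = K + 2 := by simp [hw]
    refine ⟨fun i => (a :: (w ++ [b])).getD i 0, by simp, ?_, ?_, ?_⟩
    · simp [List.getD_eq_getElem?_getD, ← hw]
    · intro i hi
      have := (List.isChain_iff_getElem.1 hc) i (by omega)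
      show A ((a :: (w ++ [b])).getD i 0) ((a :: (w ++ [b])).getD (i + 1) 0) = true
      rw [List.getD_eq_getElem _ _ (by omega), List.getD_eq_getElem _ _ (by omega)]
      exact this
    · intro i h1 h2
      obtain ⟨j, rfl⟩ : ∃ j, i = j + 1 := ⟨i - 1, by omega⟩
      apply hF
      show (a :: (w ++ [b])).getD (j + 1) 0 ∈ w
      rw [List.getD_cons_succ, List.getD_append _ _ _ _ (by omega),
        List.getD_eq_getElem _ _ (by omega)]
      exact List.getElem_mem _

lemma exists_conn (hbip : FinitelyPrimitive A) (x0 : MarkovShift A) :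
    ∃ (K : ℕ) (F : Finset ℕ), 1 ≤ K ∧ Conn A K F := by
  obtain ⟨K, F, hK, hw⟩ := exists_words hbip x0
  refine ⟨K, F, hK, fun z y n hn => ?_⟩
  have hza : Admissible A (z.1 (n - 1)) := ⟨shift^[n - 1] z, by rw [iterate_coord]; simp⟩
  obtain ⟨w, h0, h1, hA, hF⟩ := hw (z.1 (n - 1)) (y.1 0) hza ⟨y, rfl⟩
  let s : ℕ → ℕ := fun i => if i < n then z.1 i else if i < n + K then w (i - n + 1)
    else y.1 (i - (n + K))
  have hs : ∀ i, A (s i) (s (i + 1)) = true := by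
    intro i
    by_cases c1 : i + 1 < n
    · have : i < n := by omega
      simp only [s, c1, this, if_true]; exact z.2 i
    by_cases c2 : i + 1 = n
    · have e1 : s i = w 0 := by
        simp only [s]; rw [if_pos (by omega), h0]; exact congrArg z.1 (by omega)
      have e2 : s (i + 1) = w 1 := by
        simp only [s]; rw [if_neg (by omega), if_pos (by omega)]; congr 1; omega
      rw [e1, e2]; exact hA 0 (by omega)
    by_cases c3 : i + 1 < n + K
    · have e1 : s i = w (i - n + 1) := by
        simp only [s]; rw [if_neg (by omega), if_pos (by omega)]
      have e2 : s (i + 1) = w (i - n + 1 + 1) := by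
        simp only [s]; rw [if_neg (by omega), if_pos (by omega)]; congr 1; omega
      rw [e1, e2]; exact hA _ (by omega)
    by_cases c4 : i + 1 = n + K
    · have e1 : s i = w K := by
        simp only [s]; rw [if_neg (by omega), if_pos (by omega)]; congr 1; omega
      have e2 : s (i + 1) = w (K + 1) := by
        simp only [s]; rw [if_neg (by omega), if_neg (by omega), h1]; exact congrArg y.1 (by omega)
      rw [e1, e2]; exact hA _ le_rfl
    · have e1 : s i = y.1 (i - (n + K)) := by
        simp only [s]; rw [if_neg (by omega), if_neg (by omega)]
      have e2 : s (i + 1) = y.1 (i - (n + K) + 1) := by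
        simp only [s]; rw [if_neg (by omega), if_neg (by omega)]; exact congrArg y.1 (by omega)
      rw [e1, e2]; exact y.2 _
  refine ⟨⟨s, hs⟩, ?_, ?_, ?_⟩
  · intro i hi
    show s i = _
    simp [s, hi]
  · apply Subtype.ext
    funext i
    refine (iterate_coord (n + K) i (⟨s, hs⟩ : MarkovShift A)).trans ?_
    show s (i + (n + K)) = _
    simp only [s]; rw [if_neg (by omega), if_neg (by omega)]; exact congrArg y.1 (by omega)
  · intro i h2 h3
    show s i ∈ F
    simp only [s]; rw [if_neg (by omega), if_pos (by omega)]
    exact hF _ (by omega) (by omega)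

lemma birkhoff_add (g : MarkovShift A → ℝ) (n k : ℕ) (y : MarkovShift A) :
    birkhoff g (n + k) y = birkhoff g n y + birkhoff g k (shift^[n] y) := by
  simp only [birkhoff, Finset.sum_range_add]
  congr 1
  refine Finset.sum_congr rfl fun i _ => ?_
  rw [add_comm, Function.iterate_add_apply]

lemma Lop_compare {K : ℕ} {F : Finset ℕ} (hconn : Conn A K F) {g : MarkovShift A → ℝ} {D Q : ℝ}
    (hD : ∀ n, 1 ≤ n → ∀ z z' : MarkovShift A, (∀ i < n, z'.1 i = z.1 i) →
      birkhoff g n z - D ≤ birkhoff g n z')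
    (hQ : ∀ x : MarkovShift A, x.1 0 ∈ F → -Q ≤ g x) {n : ℕ} (hn : 1 ≤ n)
    {u v : MarkovShift A → ℝ≥0∞}
    (huv : ∀ z z' : MarkovShift A, (∀ i < n, z'.1 i = z.1 i) → v z ≤ u z') (x y : MarkovShift A) :
    ENNReal.ofReal (Real.exp (-D - K * Q)) * Lop g n v x ≤ Lop g (n + K) u y := by
  choose φ h1 h2 h3 using fun z => hconn z y n hn
  rw [Lop_eq_subtype, Lop_eq_subtype, ← ENNReal.tsum_mul_left]
  let ψ : {z : MarkovShift A // shift^[n] z = x} → {z : MarkovShift A // shift^[n + K] z = y} :=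
    fun z => ⟨φ z.1, h2 z.1⟩
  have hψ : Function.Injective ψ := by
    rintro ⟨a, ha⟩ ⟨b, hb⟩ hab
    have hab : φ a = φ b := congrArg Subtype.val hab
    apply Subtype.ext
    apply Subtype.ext
    funext i
    show a.1 i = b.1 i
    by_cases hi : i < n
    · rw [← h1 a i hi, ← h1 b i hi, hab]
    · obtain ⟨j, rfl⟩ : ∃ j, i = j + n := ⟨i - n, by omega⟩
      rw [← iterate_coord, ← iterate_coord, ha, hb]
  refine le_trans (ENNReal.tsum_le_tsum fun z => ?_)
    (ENNReal.tsum_comp_le_tsum_of_injective hψ _)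
  show _ ≤ ENNReal.ofReal (Real.exp (birkhoff g (n + K) (φ z.1))) * u (φ z.1)
  rw [← mul_assoc, ← ENNReal.ofReal_mul (Real.exp_pos _).le, ← Real.exp_add]
  refine mul_le_mul' (ENNReal.ofReal_le_ofReal (Real.exp_le_exp.2 ?_)) (huv _ _ (h1 z.1))
  rw [birkhoff_add]
  have e1 := hD n hn z.1 (φ z.1) (h1 z.1)
  have e2 : -(K * Q) ≤ birkhoff g K (shift^[n] (φ z.1)) := by
    unfold birkhoff
    have : ∑ j ∈ Finset.range K, (-Q) ≤
        ∑ j ∈ Finset.range K, g (shift^[j] (shift^[n] (φ z.1))) := by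
      refine Finset.sum_le_sum fun j hj => hQ _ ?_
      rw [iterate_coord, iterate_coord]
      have := Finset.mem_range.1 hj
      exact h3 z.1 _ (by omega) (by omega)
    simpa using this
  linarith

lemma open_pos {K : ℕ} {F : Finset ℕ} (hconn : Conn A K F) {g : MarkovShift A → ℝ} {D Q : ℝ}
    (hD : ∀ n, 1 ≤ n → ∀ z z' : MarkovShift A, (∀ i < n, z'.1 i = z.1 i) →
      birkhoff g n z - D ≤ birkhoff g n z')
    (hQ : ∀ x : MarkovShift A, x.1 0 ∈ F → -Q ≤ g x) (hg : Continuous g)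
    {q : ℝ≥0∞} {ν : Measure (MarkovShift A)} [IsProbabilityMeasure ν]
    (hd : ∀ u : MarkovShift A → ℝ≥0∞, Measurable u → ∫⁻ x, Lop g 1 u x ∂ν = q * ∫⁻ x, u x ∂ν)
    {U : Set (MarkovShift A)} (hU : IsOpen U) {x : MarkovShift A} (hx : x ∈ U) : ν U ≠ 0 := by
  obtain ⟨n, hn⟩ := exists_cylOf_subset hU hx
  intro h0
  have h0 : ν (cylOf x (n + 1)) = 0 :=
    measure_mono_null (fun y hy => hn fun i hi => hy i (by omega)) h0
  have hm : MeasurableSet (cylOf x (n + 1)) := (isOpen_cylOf x (n + 1)).measurableSet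
  let u : MarkovShift A → ℝ≥0∞ := (cylOf x (n + 1)).indicator 1
  have hu : Measurable u := measurable_one.indicator hm
  have e1 := dual_iter hg hd (n + 1 + K) hu
  rw [lintegral_indicator_one hm, h0, mul_zero] at e1
  have e2 : ∀ y, ENNReal.ofReal (Real.exp (-D - K * Q)) *
      Lop g (n + 1) u (shift^[n + 1] x) ≤ Lop g (n + 1 + K) u y := by
    intro y
    refine Lop_compare hconn hD hQ (by omega) ?_ _ y
    intro z z' hzz
    by_cases hz : z ∈ cylOf x (n + 1)
    · have : z' ∈ cylOf x (n + 1) := fun i hi => (hzz i hi).trans (hz i hi)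
      simp [u, hz, this]
    · simp [u, hz]
  have e3 := lintegral_mono (μ := ν) e2
  rw [e1, lintegral_const, measure_univ, mul_one, le_zero_iff, mul_eq_zero] at e3
  rcases e3 with e3 | e3
  · rw [ENNReal.ofReal_eq_zero] at e3
    exact absurd e3 (not_le.2 (Real.exp_pos _))
  · rw [Lop_eq_subtype, ENNReal.tsum_eq_zero] at e3
    have := e3 ⟨x, rfl⟩
    rw [mul_eq_zero] at this
    rcases this with h | h
    · rw [ENNReal.ofReal_eq_zero] at h
      exact absurd h (not_le.2 (Real.exp_pos _))
    · have : x ∈ cylOf x (n + 1) := fun i _ => rfl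
      simp [u, this] at h

/-- invariance, functional form -/
lemma inv_iter {g : MarkovShift A → ℝ} (hg : Continuous g)
    {q : ℝ≥0∞} (hq0 : q ≠ 0) (hqt : q ≠ ∞) {ν : Measure (MarkovShift A)}
    (hd : ∀ u : MarkovShift A → ℝ≥0∞, Measurable u → ∫⁻ x, Lop g 1 u x ∂ν = q * ∫⁻ x, u x ∂ν)
    {H : MarkovShift A → ℝ≥0∞} (hH : Measurable H) (he : Lop g 1 H = fun x => q * H x) (n : ℕ)
    {v : MarkovShift A → ℝ≥0∞} (hv : Measurable v) :
    ∫⁻ x, v (shift^[n] x) * H x ∂ν = ∫⁻ x, v x * H x ∂ν := by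
  have hm : Measurable fun x => v (shift^[n] x) * H x :=
    (hv.comp (measurable_shift.iterate n)).mul hH
  have h1 := dual_iter hg hd n hm
  rw [Lop_comp_mul, Lop_iter_eigen he] at h1
  have h2 : ∀ x, v x * (q ^ n * H x) = q ^ n * (v x * H x) := fun x => by ring
  simp_rw [h2] at h1
  rw [lintegral_const_mul _ (show Measurable fun x => v x * H x from hv.mul hH)] at h1
  exact ((ENNReal.mul_right_inj (pow_ne_zero n hq0) (ENNReal.pow_ne_top hqt)).1 h1).symm

/-- infimum over the `n`-cylinder -/
noncomputable def cylInf (H : MarkovShift A → ℝ≥0∞) (n : ℕ) (z : MarkovShift A) : ℝ≥0∞ :=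
  ⨅ z' ∈ cylOf z n, H z'

lemma measurable_cylInf (H : MarkovShift A → ℝ≥0∞) (n : ℕ) : Measurable (cylInf H n) := by
  refine measurable_of_cyl n _ fun x y hxy => ?_
  have : cylOf x n = cylOf y n := by
    ext z
    exact ⟨fun h i hi => (h i hi).trans (hxy i hi), fun h i hi => (h i hi).trans (hxy i hi).symm⟩
  simp only [cylInf, this]

lemma cylInf_le (H : MarkovShift A → ℝ≥0∞) (n : ℕ) {z z' : MarkovShift A}
    (h : ∀ i < n, z'.1 i = z.1 i) : cylInf H n z ≤ H z' :=
  iInf₂_le z' h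

lemma tendsto_cylInf {H : MarkovShift A → ℝ≥0∞} (hH : Continuous H) (z : MarkovShift A) :
    Tendsto (fun n => cylInf H n z) atTop (𝓝 (H z)) := by
  refine tendsto_order.2 ⟨fun b hb => ?_, fun b hb => ?_⟩
  · obtain ⟨c, hbc, hc⟩ := exists_between hb
    obtain ⟨n, hn⟩ := exists_cylOf_subset (isOpen_lt continuous_const hH) hc
    filter_upwards [eventually_ge_atTop n] with m hm
    refine lt_of_lt_of_le hbc (le_iInf₂ fun z' hz' => ?_)
    exact (hn (fun i hi => hz' i (by omega)) : c < H z').le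
  · exact Eventually.of_forall fun n => (cylInf_le H n fun i _ => rfl).trans_lt hb

theorem eigen_bounds {K : ℕ} {F : Finset ℕ} (hconn : Conn A K F) {g : MarkovShift A → ℝ} {D Q : ℝ}
    (hD : ∀ n, 1 ≤ n → ∀ z z' : MarkovShift A, (∀ i < n, z'.1 i = z.1 i) →
      birkhoff g n z - D ≤ birkhoff g n z')
    (hQ : ∀ x : MarkovShift A, x.1 0 ∈ F → -Q ≤ g x) (hg : Continuous g)
    {p : ℝ} {ν : Measure (MarkovShift A)} [IsProbabilityMeasure ν]
    (hd : ∀ u : MarkovShift A → ℝ≥0∞, Measurable u →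
      ∫⁻ x, Lop g 1 u x ∂ν = ENNReal.ofReal (Real.exp p) * ∫⁻ x, u x ∂ν)
    {h : MarkovShift A → ℝ} (hc : Continuous h) (hpos : ∀ x, 0 < h x)
    (he : ∀ x, ruelle g h x = Real.exp p * h x) (hIntOne : ∫ x, h x ∂ν = 1) (x : MarkovShift A) :
    Real.exp (-(K * p + D + K * Q)) ≤ h x ∧ h x ≤ Real.exp (K * p + D + K * Q) := by
  set q := ENNReal.ofReal (Real.exp p) with hq
  have hq0 : q ≠ 0 := by rw [hq, Ne, ENNReal.ofReal_eq_zero]; exact not_le.2 (Real.exp_pos _)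
  have hqt : q ≠ ∞ := ENNReal.ofReal_ne_top
  let H : MarkovShift A → ℝ≥0∞ := fun x => ENNReal.ofReal (h x)
  have hHc : Continuous H := ENNReal.continuous_ofReal.comp hc
  have hHm : Measurable H := hHc.measurable
  have heH : Lop g 1 H = fun x => q * H x := Lop_eigen hpos he
  have hI : Integrable h ν := by
    by_contra hI
    rw [integral_undef hI] at hIntOne
    exact zero_ne_one hIntOne
  have hH1 : ∫⁻ x, H x ∂ν = 1 := by
    rw [← ofReal_integral_eq_lintegral_ofReal hI (ae_of_all _ fun x => (hpos x).le), hIntOne,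
      ENNReal.ofReal_one]
  set c0 := ENNReal.ofReal (Real.exp (-D - K * Q)) with hc0
  -- the main estimate
  have key : ∀ (y : MarkovShift A) (E : Set (MarkovShift A)), MeasurableSet E →
      c0 * ∫⁻ x, E.indicator 1 x * H x ∂ν ≤ q ^ K * H y * ν E := by
    intro y E hE
    have hEm : Measurable (E.indicator (1 : MarkovShift A → ℝ≥0∞)) := measurable_one.indicator hE
    have s1 : ∀ n, 1 ≤ n → c0 * ∫⁻ x, E.indicator 1 (shift^[n] x) * cylInf H n x ∂ν ≤
        q ^ K * H y * ν E := by
      intro n hn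
      have hcm := measurable_cylInf H n
      have hm : Measurable fun x : MarkovShift A => E.indicator 1 (shift^[n] x) * cylInf H n x :=
        (hEm.comp (measurable_shift.iterate n)).mul hcm
      have t1 := dual_iter hg hd n hm
      rw [Lop_comp_mul] at t1
      have t2 : ∀ x, c0 * (E.indicator 1 x * Lop g n (cylInf H n) x) ≤
          q ^ n * (q ^ K * H y) * E.indicator 1 x := by
        intro x
        have := Lop_compare hconn hD hQ hn (u := H) (v := cylInf H n)
          (fun z z' hz => cylInf_le H n hz) x y
        rw [Lop_iter_eigen heH] at this
        calc _ = E.indicator 1 x * (c0 * Lop g n (cylInf H n) x) := by ring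
          _ ≤ E.indicator 1 x * (q ^ (n + K) * H y) := by gcongr
          _ = _ := by rw [pow_add]; ring
      have t3 := lintegral_mono (μ := ν) t2
      rw [lintegral_const_mul' _ _ ENNReal.ofReal_ne_top, t1, lintegral_const_mul _ hEm,
        lintegral_indicator_one hE] at t3
      have t4 : q ^ n * (c0 * ∫⁻ x, E.indicator 1 (shift^[n] x) * cylInf H n x ∂ν) ≤
          q ^ n * (q ^ K * H y * ν E) := by
        calc _ = c0 * (q ^ n * ∫⁻ x, E.indicator 1 (shift^[n] x) * cylInf H n x ∂ν) := by ring
          _ ≤ _ := t3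
          _ = _ := by ring
      exact (ENNReal.mul_le_mul_iff_right (pow_ne_zero n hq0) (ENNReal.pow_ne_top hqt)).1 t4
    have s2 : Tendsto (fun n => ∫⁻ x, (H x - cylInf H n x) ∂ν) atTop (𝓝 0) := by
      have := tendsto_lintegral_of_dominated_convergence (μ := ν)
        (F := fun n x => H x - cylInf H n x) (f := fun _ => 0) H
        (fun n => hHm.sub (measurable_cylInf H n))
        (fun n => ae_of_all _ fun x => tsub_le_self) (by rw [hH1]; exact ENNReal.one_ne_top)
        (ae_of_all _ fun x => by
          have := ENNReal.Tendsto.sub (tendsto_const_nhds (x := H x)) (tendsto_cylInf hHc x)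
            (Or.inl ENNReal.ofReal_ne_top)
          rwa [tsub_self] at this)
      simpa using this
    have s3 : ∀ n, 1 ≤ n → c0 * ∫⁻ x, E.indicator 1 x * H x ∂ν ≤
        q ^ K * H y * ν E + c0 * ∫⁻ x, (H x - cylInf H n x) ∂ν := by
      intro n hn
      rw [← inv_iter hg hq0 hqt hd hHm heH n hEm]
      have t1 : ∀ x, E.indicator 1 (shift^[n] x) * H x ≤
          E.indicator 1 (shift^[n] x) * cylInf H n x + (H x - cylInf H n x) := by
        intro x
        by_cases hx : shift^[n] x ∈ E
        · simp only [hx, Set.indicator_of_mem, Pi.one_apply, one_mul]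
          exact le_add_tsub
        · simp [hx]
      calc c0 * ∫⁻ x, E.indicator 1 (shift^[n] x) * H x ∂ν
          ≤ c0 * ∫⁻ x, (E.indicator 1 (shift^[n] x) * cylInf H n x + (H x - cylInf H n x)) ∂ν := by
            gcongr with x; exact t1 x
        _ = c0 * ∫⁻ x, E.indicator 1 (shift^[n] x) * cylInf H n x ∂ν +
            c0 * ∫⁻ x, (H x - cylInf H n x) ∂ν := by
            rw [lintegral_add_right _ (show Measurable fun x => H x - cylInf H n x from
              hHm.sub (measurable_cylInf H n)), mul_add]
        _ ≤ _ := add_le_add (s1 n hn) le_rfl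
    have s4 : Tendsto (fun n => q ^ K * H y * ν E + c0 * ∫⁻ x, (H x - cylInf H n x) ∂ν) atTop
        (𝓝 (q ^ K * H y * ν E + c0 * 0)) :=
      tendsto_const_nhds.add (ENNReal.Tendsto.const_mul s2 (Or.inr ENNReal.ofReal_ne_top))
    rw [mul_zero, add_zero] at s4
    refine ge_of_tendsto s4 ?_
    filter_upwards [eventually_ge_atTop 1] with n hn using s3 n hn
  have hqK : q ^ K = ENNReal.ofReal (Real.exp (K * p)) := by
    rw [hq, ← ENNReal.ofReal_pow (Real.exp_pos _).le, ← Real.exp_nat_mul]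
  constructor
  · have := key x Set.univ MeasurableSet.univ
    simp only [Set.indicator_univ, Pi.one_apply, one_mul, hH1, mul_one, measure_univ] at this
    rw [hqK, hc0, ← ENNReal.ofReal_mul (Real.exp_pos _).le, ENNReal.ofReal_le_ofReal_iff
      (mul_pos (Real.exp_pos _) (hpos x)).le] at this
    have h2 : Real.exp (-(K * p + D + K * Q)) = Real.exp (-(K * p)) * Real.exp (-D - K * Q) := by
      rw [← Real.exp_add]; congr 1; ring
    rw [h2]
    calc _ ≤ Real.exp (-(K * p)) * (Real.exp (K * p) * h x) := by gcongr
      _ = h x := by rw [← mul_assoc, ← Real.exp_add]; simp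
  · by_contra hlt
    rw [not_le] at hlt
    obtain ⟨b, hb1, hb2⟩ := exists_between hlt
    obtain ⟨y, hy⟩ := exists_le_integral hI
    rw [hIntOne] at hy
    have hU : IsOpen {z | b < h z} := isOpen_lt continuous_const hc
    have hU0 := open_pos hconn hD hQ hg hd hU hb2
    have k1 := key y _ hU.measurableSet
    have k2 : ENNReal.ofReal b * ν {z | b < h z} ≤
        ∫⁻ x, {z | b < h z}.indicator 1 x * H x ∂ν := by
      rw [← lintegral_indicator_const hU.measurableSet]
      refine lintegral_mono fun z => ?_
      by_cases hz : b < h z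
      · have hz' : z ∈ {z | b < h z} := hz
        simp only [hz', Set.indicator_of_mem, Pi.one_apply, one_mul]
        exact ENNReal.ofReal_le_ofReal hz.le
      · have hz' : z ∉ {z | b < h z} := hz
        simp [hz']
    have k3 : (c0 * ENNReal.ofReal b) * ν {z | b < h z} ≤ q ^ K * ν {z | b < h z} := by
      calc _ = c0 * (ENNReal.ofReal b * ν {z | b < h z}) := by ring
        _ ≤ c0 * ∫⁻ x, {z | b < h z}.indicator 1 x * H x ∂ν := by gcongr
        _ ≤ q ^ K * H y * ν {z | b < h z} := k1
        _ ≤ q ^ K * 1 * ν {z | b < h z} := by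
          gcongr
          exact ENNReal.ofReal_le_one.2 hy
        _ = _ := by ring
    have k4 := (ENNReal.mul_le_mul_iff_left hU0 (measure_ne_top _ _)).1 k3
    rw [hqK, hc0, ← ENNReal.ofReal_mul (Real.exp_pos _).le, ENNReal.ofReal_le_ofReal_iff
      (Real.exp_pos _).le] at k4
    have h2 : Real.exp (K * p) = Real.exp (-D - K * Q) * Real.exp (K * p + D + K * Q) := by
      rw [← Real.exp_add]; congr 1; ring
    rw [h2] at k4
    have := le_of_mul_le_mul_left k4 (Real.exp_pos _)
    linarith

end MarkovShift

open Filter Topology MeasureTheory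
open scoped ENNReal
namespace MarkovShift
variable {A : ℕ → ℕ → Bool}

lemma Lop_le_tsum {g : MarkovShift A → ℝ} {u : MarkovShift A → ℝ≥0∞} {s : ℕ → ℝ≥0∞}
    (hs : ∀ y : MarkovShift A, ENNReal.ofReal (Real.exp (g y)) * u y ≤ s (y.1 0))
    (x : MarkovShift A) : Lop g 1 u x ≤ ∑' a, s a := by
  rw [Lop_one_branch]
  refine ENNReal.tsum_le_tsum fun a => ?_
  split_ifs with h
  · have := hs (br a x)
    rwa [br_zero h] at this
  · exact zero_le

lemma term_le_Lop (g : MarkovShift A → ℝ) (u : MarkovShift A → ℝ≥0∞) (y : MarkovShift A) :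
    ENNReal.ofReal (Real.exp (g y)) * u y ≤ Lop g 1 u (shift y) := by
  rw [Lop_eq_subtype]
  have := ENNReal.le_tsum (f := fun z : {z : MarkovShift A // shift^[1] z = shift y} =>
    ENNReal.ofReal (Real.exp (birkhoff g 1 z.1)) * u z.1) ⟨y, rfl⟩
  simpa only [birkhoff_one] using this

/-- normalized potential -/
noncomputable def nrm (φ : MarkovShift A → ℝ) (p : ℝ) (h : MarkovShift A → ℝ)
    (y : MarkovShift A) : ℝ := φ y + Real.log (h y) - Real.log (h (shift y)) - p

lemma continuous_nrm {φ h : MarkovShift A → ℝ} {p : ℝ} (hφ : Continuous φ) (hc : Continuous h)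
    (hpos : ∀ x, 0 < h x) : Continuous (nrm φ p h) := by
  unfold nrm
  have h1 : Continuous fun y => Real.log (h y) := hc.log fun x => (hpos x).ne'
  exact ((hφ.add h1).sub (h1.comp continuous_shift)).sub continuous_const

lemma Lop_nrm {φ h : MarkovShift A → ℝ} {p : ℝ} (hpos : ∀ x, 0 < h x)
    (u : MarkovShift A → ℝ≥0∞) (x : MarkovShift A) :
    Lop φ 1 (fun y => u y * ENNReal.ofReal (h y)) x =
      ENNReal.ofReal (Real.exp p) * (Lop (nrm φ p h) 1 u x * ENNReal.ofReal (h x)) := by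
  rw [Lop_eq_subtype, Lop_eq_subtype, ← ENNReal.tsum_mul_right, ← ENNReal.tsum_mul_left]
  refine tsum_congr fun y => ?_
  have hy : shift y.1 = x := y.2
  have e : Real.exp (φ y.1) * h y.1 = Real.exp p * (Real.exp (nrm φ p h y.1) * h x) := by
    have h1 := Real.exp_log (hpos y.1)
    have h2 := Real.exp_log (hpos x)
    conv_lhs => rw [← h1]
    conv_rhs => rw [← h2]
    rw [← Real.exp_add, ← Real.exp_add, ← Real.exp_add, nrm, hy]
    congr 1; ring
  rw [birkhoff_one, birkhoff_one]
  have e' := congrArg ENNReal.ofReal e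
  rw [ENNReal.ofReal_mul (Real.exp_pos _).le, ENNReal.ofReal_mul (Real.exp_pos _).le,
    ENNReal.ofReal_mul (Real.exp_pos _).le] at e'
  calc _ = u y.1 * (ENNReal.ofReal (Real.exp (φ y.1)) * ENNReal.ofReal (h y.1)) := by ring
    _ = _ := by rw [e']; ring

lemma ofReal_pos_ne {t : ℝ} (ht : 0 < t) : ENNReal.ofReal t ≠ 0 := by
  rw [Ne, ENNReal.ofReal_eq_zero]; exact not_le.2 ht

lemma Lop_nrm_one {φ h : MarkovShift A → ℝ} {p : ℝ} (hpos : ∀ x, 0 < h x)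
    (he : ∀ x, ruelle φ h x = Real.exp p * h x) (x : MarkovShift A) :
    Lop (nrm φ p h) 1 (fun _ => 1) x = 1 := by
  have h1 := Lop_nrm (p := p) (φ := φ) hpos (fun _ => 1) x
  simp only [one_mul] at h1
  rw [congrFun (Lop_eigen hpos he) x] at h1
  have h2 := (ENNReal.mul_right_inj (ofReal_pos_ne (Real.exp_pos p)) ENNReal.ofReal_ne_top).1 h1
  have h3 : 1 * ENNReal.ofReal (h x) =
    Lop (nrm φ p h) 1 (fun _ => 1) x * ENNReal.ofReal (h x) := by rw [one_mul]; exact h2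
  exact ((ENNReal.mul_left_inj (ofReal_pos_ne (hpos x)) ENNReal.ofReal_ne_top).1 h3).symm

lemma nrm_nonpos {φ h : MarkovShift A → ℝ} {p : ℝ} (hpos : ∀ x, 0 < h x)
    (he : ∀ x, ruelle φ h x = Real.exp p * h x) (y : MarkovShift A) : nrm φ p h y ≤ 0 := by
  have h1 := term_le_Lop (nrm φ p h) (fun _ => 1) y
  rw [Lop_nrm_one hpos he, mul_one, ENNReal.ofReal_le_one] at h1
  exact Real.exp_le_one_iff.1 h1

lemma lintegral_gibbs {h : MarkovShift A → ℝ} (hc : Continuous h) {ν : Measure (MarkovShift A)}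
    {u : MarkovShift A → ℝ≥0∞} (hu : Measurable u) :
    ∫⁻ x, u x ∂(gibbs h ν) = ∫⁻ x, u x * ENNReal.ofReal (h x) ∂ν := by
  rw [gibbs, lintegral_withDensity_eq_lintegral_mul _
    (show Measurable fun x => ENNReal.ofReal (h x) from
      ENNReal.measurable_ofReal.comp hc.measurable) hu]
  refine lintegral_congr fun x => ?_
  simp [mul_comm]

lemma gibbs_dual {φ h : MarkovShift A → ℝ} {p : ℝ} (hφ : Continuous φ) (hc : Continuous h)
    (hpos : ∀ x, 0 < h x) {ν : Measure (MarkovShift A)}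
    (hd : ∀ u : MarkovShift A → ℝ≥0∞, Measurable u →
      ∫⁻ x, Lop φ 1 u x ∂ν = ENNReal.ofReal (Real.exp p) * ∫⁻ x, u x ∂ν)
    {u : MarkovShift A → ℝ≥0∞} (hu : Measurable u) :
    ∫⁻ x, u x ∂(gibbs h ν) = ∫⁻ x, Lop (nrm φ p h) 1 u x ∂(gibbs h ν) := by
  have hH : Measurable fun x => ENNReal.ofReal (h x) := ENNReal.measurable_ofReal.comp hc.measurable
  have hL := measurable_Lop (continuous_nrm (p := p) hφ hc hpos) hu
  rw [lintegral_gibbs hc hu, lintegral_gibbs hc hL]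
  have h1 := hd _ (show Measurable fun x => u x * ENNReal.ofReal (h x) from hu.mul hH)
  simp_rw [Lop_nrm (p := p) hpos] at h1
  rw [lintegral_const_mul _ (show Measurable fun x =>
    Lop (nrm φ p h) 1 u x * ENNReal.ofReal (h x) from hL.mul hH)] at h1
  exact ((ENNReal.mul_right_inj (ofReal_pos_ne (Real.exp_pos p)) ENNReal.ofReal_ne_top).1 h1).symm

lemma gibbs_prob {h : MarkovShift A → ℝ} (hpos : ∀ x, 0 < h x)
    {ν : Measure (MarkovShift A)} (hIntOne : ∫ x, h x ∂ν = 1) : IsProbabilityMeasure (gibbs h ν) := by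
  have hI : Integrable h ν := by
    by_contra hI
    rw [integral_undef hI] at hIntOne
    exact zero_ne_one hIntOne
  constructor
  rw [gibbs, withDensity_apply _ MeasurableSet.univ, Measure.restrict_univ,
    ← ofReal_integral_eq_lintegral_ofReal hI (ae_of_all _ fun x => (hpos x).le), hIntOne,
    ENNReal.ofReal_one]

lemma gibbs_inv {φ h : MarkovShift A → ℝ} {p : ℝ} (hφ : Continuous φ) (hc : Continuous h)
    (hpos : ∀ x, 0 < h x) {ν : Measure (MarkovShift A)}
    (hd : ∀ u : MarkovShift A → ℝ≥0∞, Measurable u →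
      ∫⁻ x, Lop φ 1 u x ∂ν = ENNReal.ofReal (Real.exp p) * ∫⁻ x, u x ∂ν)
    (he : ∀ x, ruelle φ h x = Real.exp p * h x) :
    (gibbs h ν).map shift = gibbs h ν := by
  have hH : Measurable fun x => ENNReal.ofReal (h x) := ENNReal.measurable_ofReal.comp hc.measurable
  refine Measure.ext fun s hs => ?_
  rw [Measure.map_apply measurable_shift hs]
  have hm : Measurable (s.indicator (1 : MarkovShift A → ℝ≥0∞)) := measurable_one.indicator hs
  have h1 := inv_iter hφ (ofReal_pos_ne (Real.exp_pos p)) ENNReal.ofReal_ne_top hd hH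
    (Lop_eigen hpos he) 1 hm
  rw [← lintegral_indicator_one hs, ← lintegral_indicator_one (measurable_shift hs),
    lintegral_gibbs hc hm, lintegral_gibbs hc (measurable_one.indicator (measurable_shift hs))]
  exact h1

/-- structural constants of the potential -/
structure FData (f : MarkovShift A → ℝ) (K : ℕ) (F : Finset ℕ) (V D Q : ℝ) : Prop where
  hK : 1 ≤ K
  conn : Conn A K F
  V0 : 0 ≤ V
  D0 : 0 ≤ D
  Q0 : 0 ≤ Q
  cont : Continuous f
  hV : ∀ x y : MarkovShift A, x.1 0 = y.1 0 → f x ≤ f y + V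
  hD : ∀ n, 1 ≤ n → ∀ z z' : MarkovShift A, (∀ i < n, z'.1 i = z.1 i) →
      birkhoff f n z - D ≤ birkhoff f n z'
  hQ : ∀ x : MarkovShift A, x.1 0 ∈ F → -Q ≤ f x

lemma walters_cont {f : MarkovShift A → ℝ} (hW : SatisfiesWalters f) : Continuous f := by
  rw [continuous_iff_continuousAt]
  intro x
  rw [ContinuousAt, Metric.tendsto_nhds]
  intro ε hε
  obtain ⟨k, hk, hk1⟩ := ((hW.2.eventually (gt_mem_nhds hε)).and (eventually_ge_atTop 1)).exists
  filter_upwards [(isOpen_cylOf x (1 + k)).mem_nhds (fun i _ => rfl)] with y hy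
  have : |birkhoff f 1 y - birkhoff f 1 x| ≤ waltersSup f k :=
    le_csSup (hW.1 k hk1) ⟨1, le_rfl, y, x, hy, rfl⟩
  rw [birkhoff_one, birkhoff_one] at this
  rw [Real.dist_eq]
  exact this.trans_lt hk

lemma exists_FData {f : MarkovShift A → ℝ} (hW : SatisfiesWalters f) (hV1 : Var1Finite f)
    (hbip : FinitelyPrimitive A) (x0 : MarkovShift A) :
    ∃ (K : ℕ) (F : Finset ℕ) (V D Q : ℝ), FData f K F V D Q := by
  obtain ⟨K, F, hK, hconn⟩ := exists_conn hbip x0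
  obtain ⟨V, hV⟩ := hV1
  obtain ⟨M, hM⟩ := hW.1 1 le_rfl
  have hV' : ∀ x y : MarkovShift A, x.1 0 = y.1 0 → |f x - f y| ≤ V := by
    intro x y hxy
    have hmem : |birkhoff f 1 x - birkhoff f 1 y| ∈ varSet f 1 1 := by
      refine ⟨x, y, fun i hi => ?_, rfl⟩
      obtain rfl : i = 0 := by omega
      exact hxy
    have := hV hmem
    rwa [birkhoff_one, birkhoff_one] at this
  have hM' : ∀ n, 1 ≤ n → ∀ x y : MarkovShift A, (∀ i < n + 1, x.1 i = y.1 i) →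
      |birkhoff f n x - birkhoff f n y| ≤ M := fun n hn x y hxy => hM ⟨n, hn, x, y, hxy, rfl⟩
  have hVn : 0 ≤ V := (abs_nonneg _).trans (hV' x0 x0 rfl)
  have hMn : 0 ≤ M := (abs_nonneg _).trans (hM' 1 le_rfl x0 x0 fun _ _ => rfl)
  have hfV : ∀ x y : MarkovShift A, x.1 0 = y.1 0 → f x ≤ f y + V := fun x y hxy => by
    have := (abs_le.1 (hV' x y hxy)).2
    linarith
  have hQ : ∀ a : ℕ, ∃ q : ℝ, 0 ≤ q ∧ ∀ x : MarkovShift A, x.1 0 = a → -q ≤ f x := by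
    intro a
    by_cases ha : ∃ x : MarkovShift A, x.1 0 = a
    · obtain ⟨y, hy⟩ := ha
      refine ⟨|f y| + V, by positivity, fun x hx => ?_⟩
      have := hfV y x (by rw [hx, hy])
      have := neg_abs_le (f y)
      linarith
    · exact ⟨0, le_rfl, fun x hx => absurd ⟨x, hx⟩ ha⟩
  choose q hq0 hq using hQ
  refine ⟨K, F, V, M + V, ∑ a ∈ F, q a, hK, hconn, hVn, by positivity,
    Finset.sum_nonneg fun a _ => hq0 a, walters_cont hW, hfV, ?_, ?_⟩
  · intro n hn z z' hz
    obtain ⟨m, rfl⟩ : ∃ m, n = m + 1 := ⟨n - 1, by omega⟩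
    rw [birkhoff_add, birkhoff_add, birkhoff_one, birkhoff_one]
    have e1 : f (shift^[m] z) ≤ f (shift^[m] z') + V :=
      hfV _ _ (by rw [iterate_coord, iterate_coord, hz _ (by omega)])
    have e2 : birkhoff f m z ≤ birkhoff f m z' + M := by
      rcases Nat.eq_zero_or_pos m with rfl | hm
      · simpa [birkhoff] using hMn
      · have := (abs_le.1 (hM' m hm z z' fun i hi => (hz i hi).symm)).2
        linarith
    linarith
  · intro x hx
    have := hq _ x rfl
    have := Finset.single_le_sum (fun a _ => hq0 a) hx
    linarith

end MarkovShift

open Filter Topology MeasureTheory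
open scoped ENNReal
namespace MarkovShift
variable {A : ℕ → ℕ → Bool}

lemma birkhoff_smul (f : MarkovShift A → ℝ) (β : ℝ) (n : ℕ) (z : MarkovShift A) :
    birkhoff (fun x => β * f x) n z = β * birkhoff f n z := by
  simp only [birkhoff, Finset.mul_sum]

lemma FData.dual {f : MarkovShift A → ℝ} {K : ℕ} {F : Finset ℕ} {V D Q : ℝ}
    (hf : FData f K F V D Q) {β p : ℝ} (hβ : 0 ≤ β) {h : MarkovShift A → ℝ}
    {ν : Measure (MarkovShift A)} (hR : IsRPF (fun x => β * f x) p h ν)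
    (u : MarkovShift A → ℝ≥0∞) (hu : Measurable u) :
    ∫⁻ x, Lop (fun x => β * f x) 1 u x ∂ν = ENNReal.ofReal (Real.exp p) * ∫⁻ x, u x ∂ν := by
  obtain ⟨-, -, -, hν, hdual, -⟩ := hR
  refine dual_lintegral (continuous_const.mul hf.cont) (fun a => ?_) hdual hu
  by_cases ha : ∃ y : MarkovShift A, y.1 0 = a
  · obtain ⟨y, hy⟩ := ha
    refine ⟨β * (f y + V), fun x hx => mul_le_mul_of_nonneg_left (hf.hV x y ?_) hβ⟩
    rw [hx, hy]
  · exact ⟨0, fun x hx => absurd ⟨x, hx⟩ ha⟩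

lemma FData.bounds {f : MarkovShift A → ℝ} {K : ℕ} {F : Finset ℕ} {V D Q : ℝ}
    (hf : FData f K F V D Q) {β p : ℝ} (hβ : 0 ≤ β) {h : MarkovShift A → ℝ}
    {ν : Measure (MarkovShift A)} (hR : IsRPF (fun x => β * f x) p h ν) (x : MarkovShift A) :
    |Real.log (h x)| ≤ K * p + β * D + K * (β * Q) := by
  have hd := hf.dual hβ hR
  obtain ⟨hc, hpos, he, hν, -, hIntOne⟩ := hR
  have := eigen_bounds hf.conn (g := fun x => β * f x) (D := β * D) (Q := β * Q)
    (fun n hn z z' hz => by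
      rw [birkhoff_smul, birkhoff_smul]
      have := mul_le_mul_of_nonneg_left (hf.hD n hn z z' hz) hβ
      linarith)
    (fun x hx => by
      have := mul_le_mul_of_nonneg_left (hf.hQ x hx) hβ
      linarith) (continuous_const.mul hf.cont) hd hc hpos he hIntOne x
  rw [abs_le]
  exact ⟨(Real.le_log_iff_exp_le (hpos x)).2 this.1, (Real.log_le_iff_le_exp (hpos x)).2 this.2⟩

lemma Conn.exists_pred {K : ℕ} {F : Finset ℕ} (hconn : Conn A K F) (hK : 1 ≤ K)
    (x : MarkovShift A) : ∃ y : MarkovShift A, shift y = x ∧ y.1 0 ∈ F := by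
  obtain ⟨z, -, h2, h3⟩ := hconn x x 1 le_rfl
  refine ⟨shift^[K] z, ?_, ?_⟩
  · rw [← Function.iterate_succ_apply' shift K z, ← h2, add_comm 1 K]
  · rw [iterate_coord]
    exact h3 _ (by omega) (by omega)

lemma Conn.exists_succ {K : ℕ} {F : Finset ℕ} (hconn : Conn A K F) (hK : 1 ≤ K)
    (x : MarkovShift A) : ∃ y : MarkovShift A, y.1 0 = x.1 0 ∧ y.1 1 ∈ F := by
  obtain ⟨z, h1, h2, h3⟩ := hconn x x 1 le_rfl
  exact ⟨z, h1 0 (by omega), h3 _ (by omega) (by omega)⟩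

/-- weights -/
noncomputable def wts (f : MarkovShift A → ℝ) (a : ℕ) : ℝ≥0∞ :=
  ⨆ x : {x : MarkovShift A // x.1 0 = a}, ENNReal.ofReal (Real.exp (2 * f x.1))

lemma le_wts (f : MarkovShift A → ℝ) (x : MarkovShift A) :
    ENNReal.ofReal (Real.exp (2 * f x)) ≤ wts f (x.1 0) :=
  le_iSup (fun z : {z : MarkovShift A // z.1 0 = x.1 0} =>
    ENNReal.ofReal (Real.exp (2 * f z.1))) ⟨x, rfl⟩

lemma FData.wts_le {f : MarkovShift A → ℝ} {K : ℕ} {F : Finset ℕ} {V D Q : ℝ}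
    (hf : FData f K F V D Q) (x : MarkovShift A) :
    wts f (x.1 0) ≤ ENNReal.ofReal (Real.exp (2 * V)) * ENNReal.ofReal (Real.exp (2 * f x)) := by
  refine iSup_le fun z => ?_
  rw [← ENNReal.ofReal_mul (Real.exp_pos _).le, ← Real.exp_add]
  refine ENNReal.ofReal_le_ofReal (Real.exp_le_exp.2 ?_)
  have := hf.hV z.1 x z.2
  linarith

lemma FData.wts_sum {f : MarkovShift A → ℝ} {K : ℕ} {F : Finset ℕ} {V D Q : ℝ}
    (hf : FData f K F V D Q) {p : ℝ} {h : MarkovShift A → ℝ}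
    {ν : Measure (MarkovShift A)} (hR : IsRPF (fun x => 2 * f x) p h ν) :
    ∑' a, wts f a ≠ ∞ := by
  classical
  have hb := hf.bounds (by norm_num) hR
  obtain ⟨hc, hpos, he, hν, -, hIntOne⟩ := hR
  set C := K * p + 2 * D + K * (2 * Q) with hC
  have hL : ∀ x, Lop (fun x => 2 * f x) 1 (fun _ => 1) x ≠ ∞ := by
    intro x hx
    have e1 := congrFun (Lop_eigen hpos he) x
    have e2 : ENNReal.ofReal (Real.exp (-C)) * Lop (fun x => 2 * f x) 1 (fun _ => 1) x ≤
        Lop (fun x => 2 * f x) 1 (fun x => ENNReal.ofReal (h x)) x := by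
      have := congrFun (Lop_const_mul (fun x => 2 * f x) 1 (ENNReal.ofReal (Real.exp (-C)))
        (fun _ => 1)) x
      rw [← this, Lop_eq_subtype, Lop_eq_subtype]
      refine ENNReal.tsum_le_tsum fun y => mul_le_mul' le_rfl ?_
      rw [mul_one]
      refine ENNReal.ofReal_le_ofReal ?_
      rw [← Real.le_log_iff_exp_le (hpos _)]
      exact (abs_le.1 (hb y.1)).1
    rw [e1, hx, ENNReal.mul_top (ofReal_pos_ne (Real.exp_pos _)), top_le_iff] at e2
    exact ENNReal.mul_ne_top ENNReal.ofReal_ne_top ENNReal.ofReal_ne_top e2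
  let T : ℕ → ℝ≥0∞ := fun b => if hb : ∃ x : MarkovShift A, x.1 0 = b then
    Lop (fun x => 2 * f x) 1 (fun _ => 1) hb.choose else 0
  have hT : ∀ b, T b ≠ ∞ := by
    intro b
    simp only [T]
    split_ifs
    · exact hL _
    · exact ENNReal.zero_ne_top
  -- for a point x, the branch sum dominates
  have key : ∀ a, wts f a ≤ ∑ b ∈ F, ENNReal.ofReal (Real.exp (2 * V)) *
      (if hb : ∃ x : MarkovShift A, x.1 0 = b then
        (if A a (hb.choose.1 0) = true then
          ENNReal.ofReal (Real.exp (2 * f (br a hb.choose))) * 1 else 0) else 0) := by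
    intro a
    by_cases ha : ∃ x : MarkovShift A, x.1 0 = a
    · obtain ⟨x, rfl⟩ := ha
      obtain ⟨y, hy0, hy1⟩ := hf.conn.exists_succ hf.hK x
      refine le_trans ?_ (Finset.single_le_sum (fun _ _ => zero_le) hy1)
      have hb : ∃ x : MarkovShift A, x.1 0 = y.1 1 := ⟨shift y, rfl⟩
      have hA : A (x.1 0) (hb.choose.1 0) = true := by
        rw [hb.choose_spec, ← hy0]; exact y.2 0
      rw [dif_pos hb, if_pos hA, mul_one]
      have := hf.wts_le (br (x.1 0) hb.choose)
      rwa [br_zero hA] at this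
    · have : wts f a = 0 := by
        unfold wts
        rw [ENNReal.iSup_eq_zero]
        intro x
        exact absurd ⟨x.1, x.2⟩ ha
      rw [this]; exact zero_le
  have h2 : ∑' a, wts f a ≤ ∑ b ∈ F, ENNReal.ofReal (Real.exp (2 * V)) * T b := by
    refine (ENNReal.tsum_le_tsum key).trans ?_
    rw [Summable.tsum_finsetSum fun _ _ => ENNReal.summable]
    refine Finset.sum_le_sum fun b _ => ?_
    rw [ENNReal.tsum_mul_left]
    refine mul_le_mul' le_rfl ?_
    simp only [T]
    by_cases hb : ∃ x : MarkovShift A, x.1 0 = b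
    · simp only [dif_pos hb]
      rw [Lop_one_branch]
    · simp only [dif_neg hb, tsum_zero, le_refl]
  refine ne_top_of_le_ne_top ?_ h2
  exact ENNReal.sum_ne_top.2 fun b _ => ENNReal.mul_ne_top ENNReal.ofReal_ne_top (hT b)

end MarkovShift

open Filter Topology MeasureTheory
open scoped ENNReal
namespace MarkovShift
variable {A : ℕ → ℕ → Bool}

lemma integral_comp_shift {m : Measure (MarkovShift A)} (hm : m.map shift = m)
    {L : MarkovShift A → ℝ} (hL : Continuous L) (hI : Integrable L m) :
    Integrable (fun x => L (shift x)) m ∧ ∫ x, L (shift x) ∂m = ∫ x, L x ∂m := by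
  have hmp : MeasurePreserving (shift : MarkovShift A → MarkovShift A) m m :=
    ⟨measurable_shift, hm⟩
  refine ⟨hmp.integrable_comp_of_integrable hI, ?_⟩
  have := integral_map (μ := m) (φ := shift) measurable_shift.aemeasurable
    (f := L) hL.measurable.aestronglyMeasurable
  rw [hm] at this
  exact this.symm

lemma bdd_integrable {m : Measure (MarkovShift A)} [IsProbabilityMeasure m]
    {L : MarkovShift A → ℝ} (hL : Continuous L) {C : ℝ} (hC : ∀ x, |L x| ≤ C) :
    Integrable L m :=
  Integrable.of_bound hL.measurable.aestronglyMeasurable C (ae_of_all _ hC)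

/-- Comparison of integrals of the potential and of the normalized potential. -/
lemma integral_nrm {f h : MarkovShift A → ℝ} {β p C : ℝ} (hβ : 0 < β) (hc : Continuous h)
    (hpos : ∀ x, 0 < h x) (hC : ∀ x, |Real.log (h x)| ≤ C)
    {m : Measure (MarkovShift A)} (hm : IsInvariantProb m) :
    (Integrable (nrm (fun x => β * f x) p h) m → Integrable f m) ∧
    (Integrable f m → Integrable (nrm (fun x => β * f x) p h) m ∧
      ∫ x, nrm (fun x => β * f x) p h x ∂m = β * ∫ x, f x ∂m - p) := by
  have := hm.1
  have hLc : Continuous fun y => Real.log (h y) := hc.log fun x => (hpos x).ne'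
  have hL := bdd_integrable (m := m) hLc hC
  obtain ⟨hL2, hL3⟩ := integral_comp_shift hm.2 hLc hL
  constructor
  · intro hg
    have e : f = fun x => β⁻¹ * (nrm (fun x => β * f x) p h x - Real.log (h x) +
        Real.log (h (shift x)) + p) := by
      funext x
      simp only [nrm]
      field_simp
      ring
    rw [e]
    exact (((hg.sub hL).add hL2).add (integrable_const p)).const_mul _
  · intro hf
    have h1 : Integrable (fun x => β * f x) m := hf.const_mul β
    have h2 : Integrable (fun x => β * f x + Real.log (h x)) m := h1.add hL
    have h3 : Integrable (fun x => β * f x + Real.log (h x) - Real.log (h (shift x))) m :=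
      h2.sub hL2
    refine ⟨h3.sub (integrable_const p), ?_⟩
    simp only [nrm]
    rw [integral_sub h3 (integrable_const p), integral_sub h2 hL2, integral_add h1 hL, hL3,
      integral_const_mul]
    simp

theorem main_est {f : MarkovShift A → ℝ} {K : ℕ} {F : Finset ℕ} {V D Q : ℝ}
    (hf : FData f K F V D Q) {P : ℝ → ℝ} {h : ℝ → MarkovShift A → ℝ}
    {ν : ℝ → Measure (MarkovShift A)}
    (hRPF : ∀ β : ℝ, 1 < β → IsRPF (fun x => β * f x) (P β) (h β) (ν β)) :
    ∃ (s : ℕ → ℝ≥0∞) (B E : ℝ), ∑' a, s a ≠ ∞ ∧ (∀ x, f x ≤ B) ∧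
      ∀ β, 4 ≤ β → IsInvariantProb (gibbs (h β) (ν β)) ∧
        (∀ a, gibbs (h β) (ν β) {x | x.1 0 = a} ≤ s a) ∧
        Integrable f (gibbs (h β) (ν β)) ∧
        ∀ m : Measure (MarkovShift A), IsInvariantProb m → Integrable f m →
          ∫ x, f x ∂m ≤ ∫ x, f x ∂(gibbs (h β) (ν β)) + E / β := by
  have hW := hf.wts_sum (hRPF 2 (by norm_num))
  set W := ∑' a, wts f a with hWdef
  -- the upper bound
  obtain ⟨B, hB0, hWB⟩ : ∃ B : ℝ, 0 ≤ B ∧ W ≤ ENNReal.ofReal (Real.exp (2 * B)) := by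
    refine ⟨W.toReal, ENNReal.toReal_nonneg, ?_⟩
    rw [← ENNReal.ofReal_toReal hW]
    refine ENNReal.ofReal_le_ofReal ?_
    rw [ENNReal.toReal_ofReal ENNReal.toReal_nonneg]
    have := Real.add_one_le_exp (2 * W.toReal)
    have : 0 ≤ W.toReal := ENNReal.toReal_nonneg
    linarith
  have hfB : ∀ x, f x ≤ B := by
    intro x
    have h1 := (le_wts f x).trans ((ENNReal.le_tsum _).trans hWB)
    rw [ENNReal.ofReal_le_ofReal_iff (Real.exp_pos _).le, Real.exp_le_exp] at h1
    linarith
  set C2 := K * B + D + K * Q with hC2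
  set C3 := 2 * C2 + Q with hC3
  set cc := ENNReal.ofReal (Real.exp (2 * C3)) with hcc
  have hs : ∑' a, (2 * (cc * wts f a)) = 2 * (cc * W) := by
    rw [ENNReal.tsum_mul_left, ENNReal.tsum_mul_left]
  have hsf : 2 * (cc * W) ≠ ∞ :=
    ENNReal.mul_ne_top (by norm_num) (ENNReal.mul_ne_top ENNReal.ofReal_ne_top hW)
  refine ⟨fun a => 2 * (cc * wts f a), B, (2 * (cc * W)).toReal, by rw [hs]; exact hsf, hfB,
    fun β hβ => ?_⟩
  have hR := hRPF β (by linarith)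
  have hβ0 : 0 < β := by linarith
  have hd := hf.dual hβ0.le hR
  have hbd := hf.bounds hβ0.le hR
  obtain ⟨hc, hpos, he, hν, -, hIntOne⟩ := hR
  have hφc : Continuous fun x => β * f x := continuous_const.mul hf.cont
  -- pressure bounds
  have hd1 := hd (fun _ => 1) measurable_const
  simp only [lintegral_const, measure_univ, mul_one] at hd1
  have hPle : P β ≤ β * B := by
    have : ENNReal.ofReal (Real.exp (P β)) ≤ ENNReal.ofReal (Real.exp (β * B)) := by
      rw [← hd1]
      calc ∫⁻ x, Lop (fun x => β * f x) 1 (fun _ => 1) x ∂(ν β)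
          ≤ ∫⁻ x, ENNReal.ofReal (Real.exp (β * B)) ∂(ν β) := by
            refine lintegral_mono fun x => ?_
            refine (Lop_le_tsum (s := fun a =>
              ENNReal.ofReal (Real.exp ((β - 2) * B)) * wts f a) (fun y => ?_) x).trans ?_
            · rw [mul_one]
              refine le_trans ?_ (mul_le_mul' le_rfl (le_wts f y))
              rw [← ENNReal.ofReal_mul (Real.exp_pos _).le, ← Real.exp_add]
              refine ENNReal.ofReal_le_ofReal (Real.exp_le_exp.2 ?_)
              have := mul_le_mul_of_nonneg_left (hfB y) (show 0 ≤ β - 2 by linarith)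
              linarith
            · rw [ENNReal.tsum_mul_left]
              refine (mul_le_mul' le_rfl hWB).trans ?_
              rw [← ENNReal.ofReal_mul (Real.exp_pos _).le, ← Real.exp_add]
              refine ENNReal.ofReal_le_ofReal (Real.exp_le_exp.2 (le_of_eq (by ring)))
        _ = _ := by simp
    rwa [ENNReal.ofReal_le_ofReal_iff (Real.exp_pos _).le, Real.exp_le_exp] at this
  have hPge : -(β * Q) ≤ P β := by
    have : ENNReal.ofReal (Real.exp (-(β * Q))) ≤ ENNReal.ofReal (Real.exp (P β)) := by
      rw [← hd1]
      calc ENNReal.ofReal (Real.exp (-(β * Q)))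
          = ∫⁻ x, ENNReal.ofReal (Real.exp (-(β * Q))) ∂(ν β) := by simp
        _ ≤ _ := by
          refine lintegral_mono fun x => ?_
          obtain ⟨y, rfl, hyF⟩ := hf.conn.exists_pred hf.hK x
          refine le_trans ?_ (term_le_Lop _ _ y)
          rw [mul_one]
          refine ENNReal.ofReal_le_ofReal (Real.exp_le_exp.2 ?_)
          have := mul_le_mul_of_nonneg_left (hf.hQ y hyF) hβ0.le
          linarith
    rwa [ENNReal.ofReal_le_ofReal_iff (Real.exp_pos _).le, Real.exp_le_exp] at this
  have hbd' : ∀ x, |Real.log (h β x)| ≤ β * C2 := by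
    intro x
    refine (hbd x).trans ?_
    have := mul_le_mul_of_nonneg_left hPle (Nat.cast_nonneg (α := ℝ) K)
    rw [hC2]; linarith
  set g := nrm (fun x => β * f x) (P β) (h β) with hg
  have hgc : Continuous g := continuous_nrm hφc hc hpos
  have hg0 : ∀ y, g y ≤ 0 := nrm_nonpos hpos he
  have hg1 : ∀ y, g y ≤ β * (f y + C3) := by
    intro y
    have e1 := (abs_le.1 (hbd' y)).2
    have e2 := (abs_le.1 (hbd' (shift y))).1
    simp only [hg, nrm, hC3]
    linarith
  have hg2 : ∀ y, g y / 2 ≤ 2 * (f y + C3) := by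
    intro y
    rcases le_total (f y + C3) 0 with h0 | h0
    · have e1 := hg1 y
      have e2 := mul_le_mul_of_nonpos_right hβ h0
      linarith
    · have e1 := hg0 y
      linarith
  have hg3 : ∀ y, ENNReal.ofReal (Real.exp (g y / 2)) ≤ cc * wts f (y.1 0) := by
    intro y
    refine le_trans ?_ (mul_le_mul' le_rfl (le_wts f y))
    rw [hcc, ← ENNReal.ofReal_mul (Real.exp_pos _).le, ← Real.exp_add]
    refine ENNReal.ofReal_le_ofReal (Real.exp_le_exp.2 ?_)
    have := hg2 y
    linarith
  set μ := gibbs (h β) (ν β) with hμ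
  have hdual : ∀ {u : MarkovShift A → ℝ≥0∞}, Measurable u →
      ∫⁻ x, u x ∂μ = ∫⁻ x, Lop g 1 u x ∂μ := fun hu => gibbs_dual hφc hc hpos hd hu
  have hinv : IsInvariantProb μ := ⟨gibbs_prob hpos hIntOne, gibbs_inv hφc hc hpos hd he⟩
  have := hinv.1
  have hneg : ∫⁻ x, ENNReal.ofReal (-g x) ∂μ ≤ 2 * (cc * W) := by
    rw [hdual (show Measurable fun x => ENNReal.ofReal (-g x) from
      ENNReal.measurable_ofReal.comp hgc.measurable.neg)]
    calc _ ≤ ∫⁻ x, 2 * (cc * W) ∂μ := by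
          refine lintegral_mono fun x => ?_
          rw [← hs]
          refine Lop_le_tsum (fun y => ?_) x
          refine le_trans ?_ (mul_le_mul' le_rfl (hg3 y))
          show ENNReal.ofReal (Real.exp (g y)) * ENNReal.ofReal (-g y) ≤ _
          rw [← ENNReal.ofReal_mul (Real.exp_pos _).le,
            ← ENNReal.ofReal_ofNat, ← ENNReal.ofReal_mul (by norm_num)]
          refine ENNReal.ofReal_le_ofReal ?_
          have e1 : Real.exp (g y) = Real.exp (g y / 2) * Real.exp (g y / 2) := by
            rw [← Real.exp_add]; congr 1; ring
          have e2 : Real.exp (g y / 2) * Real.exp (-g y / 2) = 1 := by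
            rw [← Real.exp_add, neg_div, add_neg_cancel, Real.exp_zero]
          have e3 : -g y / 2 ≤ Real.exp (-g y / 2) := by
            have := Real.add_one_le_exp (-g y / 2); linarith
          have e4 := Real.exp_pos (g y / 2)
          have e5 := mul_le_mul_of_nonneg_left e3 e4.le
          rw [e2] at e5
          have e6 := mul_le_mul_of_nonneg_left e5 e4.le
          rw [e1]; linarith
      _ = _ := by simp
  have hnegI : Integrable (fun x => -g x) μ := by
    refine ⟨hgc.measurable.neg.aestronglyMeasurable, ?_⟩
    rw [hasFiniteIntegral_iff_ofReal (ae_of_all _ fun x => by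
      have := hg0 x
      show 0 ≤ -g x
      linarith)]
    exact hneg.trans_lt hsf.lt_top
  have hgI : Integrable g μ := by simpa using hnegI.neg
  have hfI : Integrable f μ := (integral_nrm hβ0 hc hpos hbd' hinv).1 hgI
  refine ⟨hinv, fun a => ?_, hfI, fun m hm hfm => ?_⟩
  · have hcl : MeasurableSet {x : MarkovShift A | x.1 0 = a} :=
      (isClopen_coord 0 {a}).isOpen.measurableSet
    rw [← lintegral_indicator_one hcl, hdual (measurable_one.indicator hcl)]
    calc _ ≤ ∫⁻ x, 2 * (cc * wts f a) ∂μ := by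
          refine lintegral_mono fun x => ?_
          refine (Lop_le_tsum (s := fun b => if b = a then 2 * (cc * wts f a) else 0)
            (fun y => ?_) x).trans (by simp)
          by_cases hy : y.1 0 = a
          · have hy' : y ∈ {x : MarkovShift A | x.1 0 = a} := hy
            simp only [hy, hy', Set.indicator_of_mem, Pi.one_apply, mul_one, if_true]
            have h3 := hg3 y
            rw [hy] at h3
            refine (le_trans (ENNReal.ofReal_le_ofReal (Real.exp_le_exp.2 ?_)) h3).trans ?_
            · have := hg0 y; linarith
            · rw [two_mul]; exact le_self_add
          · have hy' : y ∉ {x : MarkovShift A | x.1 0 = a} := hy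
            simp [hy']
      _ = _ := by simp
  · have e1 := ((integral_nrm (p := P β) hβ0 hc hpos hbd' hinv).2 hfI).2
    have e2 := ((integral_nrm (p := P β) hβ0 hc hpos hbd' hm).2 hfm).2
    have e3 : ∫ x, nrm (fun x => β * f x) (P β) (h β) x ∂m ≤ 0 :=
      integral_nonpos fun x => hg0 x
    have e4 : ∫ x, -g x ∂μ ≤ (2 * (cc * W)).toReal := by
      rw [integral_eq_lintegral_of_nonneg_ae (ae_of_all _ fun x => by
        have := hg0 x
        show 0 ≤ -g x
        linarith) hnegI.1]
      exact ENNReal.toReal_mono hsf hneg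
    rw [integral_neg] at e4
    have e5 : β * ∫ x, f x ∂m ≤ β * ∫ x, f x ∂μ + (2 * (cc * W)).toReal := by linarith
    have e6 : β * (∫ x, f x ∂μ + (2 * (cc * W)).toReal / β) =
        β * ∫ x, f x ∂μ + (2 * (cc * W)).toReal := by field_simp
    rw [← e6] at e5
    exact le_of_mul_le_mul_left e5 hβ0

end MarkovShift

open Filter Topology MeasureTheory
open scoped ENNReal
namespace MarkovShift
variable {A : ℕ → ℕ → Bool}

lemma isClosedEmbedding_val :
    IsClosedEmbedding (fun x : MarkovShift A => (x.1 : ℕ → ℕ)) := by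
  refine ⟨isEmbedding_val, ?_⟩
  have : Set.range (fun x : MarkovShift A => (x.1 : ℕ → ℕ)) =
      ⋂ i, (fun x : ℕ → ℕ => (x i, x (i + 1))) ⁻¹' {q : ℕ × ℕ | A q.1 q.2 = true} := by
    ext x
    simp only [Set.mem_range, Set.mem_iInter]
    exact ⟨fun ⟨y, hy⟩ i => hy ▸ y.2 i, fun h => ⟨⟨x, h⟩, rfl⟩⟩
  rw [this]
  refine isClosed_iInter fun i => (isClosed_discrete _).preimage ?_
  exact (continuous_apply i).prodMk (continuous_apply (i + 1))

lemma inv_coord {m : Measure (MarkovShift A)} (hm : m.map shift = m) (i : ℕ) (S : Set ℕ) :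
    m {x | x.1 i ∈ S} = m {x | x.1 0 ∈ S} := by
  have hmp : MeasurePreserving (shift : MarkovShift A → MarkovShift A) m m :=
    ⟨measurable_shift, hm⟩
  have h1 := (hmp.iterate i).measure_preimage
    (isClopen_coord (A := A) 0 S).isOpen.measurableSet.nullMeasurableSet
  rw [← h1]
  congr 1
  ext x
  show x.1 i ∈ S ↔ (shift^[i] x).1 0 ∈ S
  rw [iterate_coord, zero_add]

lemma tight_of {s : ℕ → ℝ≥0∞} (hs : ∑' a, s a ≠ ∞) {S : Set (Measure (MarkovShift A))}
    (hS : ∀ m ∈ S, IsInvariantProb m ∧ ∀ a, m {x | x.1 0 = a} ≤ s a) :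
    IsTightMeasureSet S := by
  rw [isTightMeasureSet_iff_exists_isCompact_measure_compl_le]
  intro ε hε
  obtain ⟨ε', hε', hsum⟩ := ENNReal.exists_pos_sum_of_countable' hε.ne' ℕ
  have hN : ∀ i, ∃ N : ℕ, ∑' k, s (k + N) ≤ ε' i := fun i =>
    (((ENNReal.tendsto_sum_nat_add s hs).eventually (gt_mem_nhds (hε' i))).exists).imp
      fun _ h => h.le
  choose N hN using hN
  refine ⟨(fun x : MarkovShift A => (x.1 : ℕ → ℕ)) ⁻¹' Set.univ.pi fun i => Set.Iio (N i),
    isClosedEmbedding_val.isCompact_preimage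
      (isCompact_univ_pi fun i => (Set.finite_Iio _).isCompact), fun m hm => ?_⟩
  obtain ⟨hinv, hma⟩ := hS m hm
  have hsub : ((fun x : MarkovShift A => (x.1 : ℕ → ℕ)) ⁻¹'
      Set.univ.pi fun i => Set.Iio (N i))ᶜ ⊆ ⋃ i, {x : MarkovShift A | x.1 i ∈ Set.Ici (N i)} := by
    intro x hx
    simp only [Set.mem_compl_iff, Set.mem_preimage, Set.mem_univ_pi, Set.mem_Iio, not_forall,
      not_lt] at hx
    exact Set.mem_iUnion.2 hx
  refine (measure_mono hsub).trans ((measure_iUnion_le _).trans (le_trans ?_ hsum.le))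
  refine ENNReal.tsum_le_tsum fun i => ?_
  rw [inv_coord hinv.2]
  refine le_trans ?_ (hN i)
  have hsub2 : {x : MarkovShift A | x.1 0 ∈ Set.Ici (N i)} ⊆
      ⋃ k, {x : MarkovShift A | x.1 0 = k + N i} := by
    intro x hx
    have hx : N i ≤ x.1 0 := hx
    refine Set.mem_iUnion.2 ⟨x.1 0 - N i, ?_⟩
    show x.1 0 = x.1 0 - N i + N i
    omega
  exact (measure_mono hsub2).trans ((measure_iUnion_le _).trans
    (ENNReal.tsum_le_tsum fun k => hma _))

lemma tendsto_pm_of_cyl {μs : ℕ → ProbabilityMeasure (MarkovShift A)}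
    {μ' : ProbabilityMeasure (MarkovShift A)}
    (h : ∀ w : List ℕ, Tendsto (fun j => ((μs j : Measure (MarkovShift A)) (cylinder w)).toReal)
      atTop (𝓝 ((μ' : Measure (MarkovShift A)) (cylinder w)).toReal)) :
    Tendsto μs atTop (𝓝 μ') := by
  refine IsPiSystem.tendsto_probabilityMeasure_of_tendsto_of_mem
    (S := {s : Set (MarkovShift A) | ∃ w, s = cylinder w}) isPiSystem_cylinder ?_ ?_ ?_
  · rintro s ⟨w, rfl⟩
    exact (isClopen_cylinder w).isOpen.measurableSet
  · intro u hu x hx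
    obtain ⟨n, hn⟩ := exists_cylOf_subset hu hx
    exact ⟨cylOf x n, ⟨_, cylOf_eq_cylinder x n⟩, (isOpen_cylOf x n).mem_nhds fun i _ => rfl, hn⟩
  · rintro s ⟨w, rfl⟩
    rw [← NNReal.tendsto_coe]
    exact h w

lemma cyl_of_tendsto_pm {μs : ℕ → ProbabilityMeasure (MarkovShift A)}
    {μ' : ProbabilityMeasure (MarkovShift A)} (h : Tendsto μs atTop (𝓝 μ')) (w : List ℕ) :
    Tendsto (fun j => ((μs j : Measure (MarkovShift A)) (cylinder w)).toReal)
      atTop (𝓝 ((μ' : Measure (MarkovShift A)) (cylinder w)).toReal) := by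
  have := ProbabilityMeasure.tendsto_measure_of_isClopen_of_tendsto h (isClopen_cylinder w)
  rw [← NNReal.tendsto_coe] at this
  exact this

theorem limit_max {f : MarkovShift A → ℝ} (hfc : Continuous f) {B E : ℝ} (hB : ∀ x, f x ≤ B)
    {μs : ℕ → ProbabilityMeasure (MarkovShift A)} {μ' : ProbabilityMeasure (MarkovShift A)}
    (hlim : Tendsto μs atTop (𝓝 μ')) {βs : ℕ → ℝ} (hβ : Tendsto βs atTop atTop)
    (hest : ∀ j, 4 ≤ βs j → IsInvariantProb (μs j : Measure (MarkovShift A)) ∧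
        Integrable f (μs j : Measure (MarkovShift A)) ∧
        ∀ m : Measure (MarkovShift A), IsInvariantProb m → Integrable f m →
          ∫ x, f x ∂m ≤ ∫ x, f x ∂(μs j : Measure (MarkovShift A)) + E / βs j) :
    IsMaximizing f (μ' : Measure (MarkovShift A)) := by
  have hev : ∀ᶠ j in atTop, 4 ≤ βs j := hβ.eventually (eventually_ge_atTop 4)
  have hinv : IsInvariantProb (μ' : Measure (MarkovShift A)) := by
    refine ⟨inferInstance, ?_⟩
    have h1 := ProbabilityMeasure.tendsto_map_of_tendsto_of_continuous μs μ' hlim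
      (f := shift) continuous_shift
    have h2 : (fun i => (μs i).map continuous_shift.measurable.aemeasurable) =ᶠ[atTop] μs := by
      filter_upwards [hev] with j hj
      apply Subtype.ext
      exact (hest j hj).1.2
    have h3 := tendsto_nhds_unique (h1.congr' h2) hlim
    exact congrArg Subtype.val h3
  have hkey : ∀ m : Measure (MarkovShift A), IsInvariantProb m → Integrable f m →
      ∫⁻ x, ENNReal.ofReal (B - f x) ∂(μ' : Measure (MarkovShift A)) ≤
        ENNReal.ofReal (B - ∫ x, f x ∂m) := by
    intro m hm hfm
    have h1 := lintegral_le_liminf_lintegral_of_forall_isOpen_measure_le_liminf_measure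
      (μ := (μ' : Measure (MarkovShift A))) (μs := fun j => (μs j : Measure (MarkovShift A)))
      (f := fun x => B - f x) (continuous_const.sub hfc) (fun x => sub_nonneg.2 (hB x))
      (fun G hG => ProbabilityMeasure.le_liminf_measure_open_of_tendsto hlim hG)
    refine h1.trans ?_
    have h2 : Tendsto (fun j => ENNReal.ofReal (B - ∫ x, f x ∂m + E / βs j)) atTop
        (𝓝 (ENNReal.ofReal (B - ∫ x, f x ∂m))) := by
      refine ENNReal.tendsto_ofReal ?_
      have := (tendsto_const_nhds (x := B - ∫ x, f x ∂m)).add (hβ.const_div_atTop E)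
      rwa [add_zero] at this
    rw [← h2.liminf_eq]
    refine liminf_le_liminf ?_
    filter_upwards [hev] with j hj
    obtain ⟨-, hI, hle⟩ := hest j hj
    have h3 : Integrable (fun x => B - f x) (μs j : Measure (MarkovShift A)) :=
      (integrable_const B).sub hI
    rw [← ofReal_integral_eq_lintegral_ofReal h3 (ae_of_all _ fun x => sub_nonneg.2 (hB x)),
      integral_sub (integrable_const B) hI]
    refine ENNReal.ofReal_le_ofReal ?_
    have := hle m hm hfm
    simp only [integral_const, probReal_univ, one_smul]
    linarith
  obtain ⟨j, hj⟩ := hev.exists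
  have hBI : Integrable (fun x => B - f x) (μ' : Measure (MarkovShift A)) := by
    refine ⟨(continuous_const.sub hfc).measurable.aestronglyMeasurable, ?_⟩
    rw [hasFiniteIntegral_iff_ofReal (ae_of_all _ fun x => sub_nonneg.2 (hB x))]
    exact (hkey _ (hest j hj).1 (hest j hj).2.1).trans_lt ENNReal.ofReal_lt_top
  have hfI : Integrable f (μ' : Measure (MarkovShift A)) := by
    have := (integrable_const B).sub hBI
    refine this.congr (ae_of_all _ fun x => ?_)
    simp
  refine ⟨hinv, hfI, ?_⟩
  have hgr : IsGreatest {c | ∃ μ : Measure (MarkovShift A),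
      IsInvariantProb μ ∧ Integrable f μ ∧ ∫ x, f x ∂μ = c}
      (∫ x, f x ∂(μ' : Measure (MarkovShift A))) := by
    refine ⟨⟨_, hinv, hfI, rfl⟩, ?_⟩
    rintro c ⟨m, hm, hfm, rfl⟩
    have h1 := hkey m hm hfm
    have := hm.1
    have h0 : ∫ x, f x ∂m ≤ B := by
      have := integral_mono hfm (integrable_const B) hB
      simpa using this
    rw [← ofReal_integral_eq_lintegral_ofReal hBI (ae_of_all _ fun x => sub_nonneg.2 (hB x)),
      ENNReal.ofReal_le_ofReal_iff (by linarith), integral_sub (integrable_const B) hfI] at h1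
    simp only [integral_const, probReal_univ, one_smul] at h1
    linarith
  exact hgr.csSup_eq.symm

end MarkovShift

namespace MarkovShift

/-- The family `(μ_β)_{β>1}` has a weak* accumulation point as `β → ∞`, and every
weak* limit of a sequence `μ_{β_j}` with `β_j → ∞` is a maximizing measure for `f`. -/
theorem accumulation_points_are_maximizing
    (A : ℕ → ℕ → Bool)
    (hmix : TopologicallyMixing A)
    (hbip : FinitelyPrimitive A)
    (f : MarkovShift A → ℝ)
    (hWalters : SatisfiesWalters f)
    (hVar1 : Var1Finite f)
    (P : ℝ → ℝ)
    (hPfin : HasGurevichPressure f (P 1))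
    (h : ℝ → MarkovShift A → ℝ)
    (ν : ℝ → Measure (MarkovShift A))
    (hRPF : ∀ β : ℝ, 1 < β → IsRPF (fun x => β * f x) (P β) (h β) (ν β)) :
    (∃ (βs : ℕ → ℝ) (μ' : Measure (MarkovShift A)), (∀ j, 1 < βs j) ∧
        Tendsto βs atTop atTop ∧ IsProbabilityMeasure μ' ∧
        ∀ w : List ℕ,
          Tendsto (fun j => ((gibbs (h (βs j)) (ν (βs j))) (cylinder w)).toReal)
            atTop (𝓝 ((μ' (cylinder w)).toReal))) ∧
      (∀ (βs : ℕ → ℝ) (μ' : Measure (MarkovShift A)), (∀ j, 1 < βs j) →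
        Tendsto βs atTop atTop → IsProbabilityMeasure μ' →
        (∀ w : List ℕ,
          Tendsto (fun j => ((gibbs (h (βs j)) (ν (βs j))) (cylinder w)).toReal)
            atTop (𝓝 ((μ' (cylinder w)).toReal))) →
        IsMaximizing f μ') := by
  obtain ⟨x0⟩ : Nonempty (MarkovShift A) := by
    have := (hRPF 2 (by norm_num)).2.2.2.1
    exact nonempty_of_isProbabilityMeasure (ν 2)
  obtain ⟨K, F, V, D, Q, hf⟩ := exists_FData hWalters hVar1 hbip x0
  obtain ⟨s, B, E, hs, hB, hest⟩ := main_est hf hRPF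
  have hprob : ∀ β, 1 < β → IsProbabilityMeasure (gibbs (h β) (ν β)) := fun β hβ =>
    gibbs_prob (hRPF β hβ).2.1 (hRPF β hβ).2.2.2.2.2
  refine ⟨?_, ?_⟩
  · let b : ℕ → ℝ := fun j => (j : ℝ) + 4
    have hb4 : ∀ j, 4 ≤ b j := fun j => by
      have : (0 : ℝ) ≤ j := Nat.cast_nonneg j
      simp only [b]; linarith
    have hb1 : ∀ j, 1 < b j := fun j => lt_of_lt_of_le (by norm_num) (hb4 j)
    have hbt : Tendsto b atTop atTop :=
      tendsto_atTop_add_const_right _ _ tendsto_natCast_atTop_atTop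
    let M : ℕ → ProbabilityMeasure (MarkovShift A) := fun j =>
      ⟨gibbs (h (b j)) (ν (b j)), hprob _ (hb1 j)⟩
    have ht : IsTightMeasureSet {x | ∃ μ ∈ Set.range M, (μ : Measure (MarkovShift A)) = x} := by
      refine tight_of hs ?_
      rintro m ⟨μ, ⟨j, rfl⟩, rfl⟩
      have := hest (b j) (hb4 j)
      exact ⟨this.1, this.2.1⟩
    have hcomp := isCompact_closure_of_isTightMeasureSet ht
    obtain ⟨μ', -, φ, hφ, hlim⟩ := hcomp.tendsto_subseq
      (fun n => subset_closure (Set.mem_range_self n))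
    exact ⟨fun j => b (φ j), μ', fun j => hb1 _, hbt.comp hφ.tendsto_atTop, inferInstance,
      fun w => cyl_of_tendsto_pm hlim w⟩
  · intro βs μ' hβ1 hβt hμ' hw
    let M : ℕ → ProbabilityMeasure (MarkovShift A) := fun j =>
      ⟨gibbs (h (βs j)) (ν (βs j)), hprob _ (hβ1 j)⟩
    have hlim : Tendsto M atTop (𝓝 ⟨μ', hμ'⟩) := tendsto_pm_of_cyl hw
    exact limit_max hf.cont hB hlim hβt fun j hj =>
      ⟨(hest _ hj).1, (hest _ hj).2.2.1, (hest _ hj).2.2.2⟩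

end MarkovShift
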